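/- arXiv:2009.05937 — 3 statements merged into one kernel-verified Lean document; each statement's English description precedes it below -/
import Mathlib

section
/- Let n = 2m with m ≥ 4, q = 2^m, and let f(x) = x^{3q} + a₁x^{2q+1} + a₂x^{q+2} + a₃x³ where a₁ ∈ F_{2^m} and a₂, a₃ ∈ F_{2^n}. Then f is APN over F_{2^n} if and only if: (1) m is even and (a₁,a₂,a₃) ∈ Γ₁ ∪ Γ₂, or (2) m is odd and (a₁,a₂,a₃) ∈ Γ₁. -/
/-- `f` is almost perfect nonlinear (APN): for every `a ≠ 0` and every `b`, the equation
`f (x + a) + f x = b` has at most two solutions `x`. -/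
def IsAPN {F : Type*} [Field F] (f : F → F) : Prop :=
  ∀ a : F, a ≠ 0 → ∀ b : F, {x : F | f (x + a) + f x = b}.ncard ≤ 2

/-- `L` is an affine permutation: it is bijective and `x ↦ L x - L 0` is additive
(over a field of characteristic 2, additive maps are exactly the `𝔽₂`-linear ones). -/
def IsAffinePerm {F : Type*} [Field F] (L : F → F) : Prop :=
  Function.Bijective L ∧ ∀ x y : F, L (x + y) + L 0 = L x + L y

/-- `f` and `g` are affine equivalent: `g = L₁ ∘ f ∘ L₂` for affine permutations `L₁, L₂`. -/
def AffEquiv {F : Type*} [Field F] (f g : F → F) : Prop :=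
  ∃ L₁ L₂ : F → F, IsAffinePerm L₁ ∧ IsAffinePerm L₂ ∧ ∀ x : F, g x = L₁ (f (L₂ x))

/-!
Write `f x = B v v` with `v = (x, x̄)` and `B z a` additive in `a` and Frobenius-semilinear in `z`.
Then `f` is APN iff, for `v ≠ 0` in the plane of such vectors, `B w v + B v w = 0` holds there only
for `w ∈ {0, v}`. The Plücker coordinates of the plane spanned by the coefficients of `B` and of
its conjugate give `θ₁, …, θ₄`: `θ₁ = p₀₃ + p₁₂`, `θ₂ = p₀₂`, `θ₃ = p₂₃`, `θ₄ = p₁₂`.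

If the ratio `B w v / B v w` lies in `𝔽_q`, rescaling `w` makes the polarization vanish. Hence, for
an APN `f`, a binary quadratic form in `w` attached to `v` has no nonzero zero in the plane, so its
Artin–Schreier invariant `disc v` has the same trace for every `v` outside the zeros of the two
forms `quad` and `quart`. The form `quad = p₀₂ X² + θ₁ XY + p₁₃ Y²` has its zeros exchanged by the
real structure when `θ₁ ≠ 0` and `Tr_m (θ₂ θ̄₂ / θ₁²) = 0`; otherwise it has a real zero. A basis
adapted to these zeros makes `p₀₂` vanish and `disc` a Laurent polynomial, on the `(q + 1)`-th
roots of unity in the first case and on `𝔽_q*` in the second. Comparing Fourier coefficients of its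
trace, which needs `m ≥ 4`, excludes the second case; in the first it leaves the forms `c₀ z₁² a₁ +
c₃ z₂² a₂` (this is `Γ₁`) and `c₁ z₁² a₂ + c₂ z₂² a₁` (this is `Γ₂`), and the latter is APN only
for even `m`.
-/

namespace KimAPN

open Finset

/-- The unnormalized `k`-th Fourier coefficient of `φ` on the powers `ζ ^ j`, `j < N`, where `ζ`
is meant to be a primitive `N`-th root of unity. -/
def fourierCoeff {F : Type*} [Field F] (ζ : F) (N : ℕ) (φ : F → F) (k : ℤ) : F :=
  ∑ j ∈ range N, (ζ ^ j) ^ (-k) * φ (ζ ^ j)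

/-- The absolute trace polynomial `x + x ^ 2 + ⋯ + x ^ 2 ^ (m - 1)`; on a field with `2 ^ m`
elements it is the absolute trace. -/
def traceSum {F : Type*} [Field F] (m : ℕ) (x : F) : F :=
  ∑ i ∈ range m, x ^ 2 ^ i

lemma two_pow_le_and_parity {m i r : ℕ} (hr : 2 ^ m = 16 * r) (hi : i < m) :
    2 ^ i ≤ 8 * r ∧ (2 ^ i = 1 ∨ 2 ∣ 2 ^ i) := by
  refine ⟨?_, ?_⟩
  · have := Nat.pow_le_pow_right two_pos (Nat.succ_le_of_lt hi)
    omega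
  · rcases i.eq_zero_or_pos with rfl | hpos
    · exact Or.inl rfl
    · exact Or.inr (dvd_pow_self 2 hpos.ne')

section FourierCoeff

variable {F : Type*} [Field F] {ζ : F} {N : ℕ}

lemma fourierCoeff_add (φ ψ : F → F) (k : ℤ) :
    fourierCoeff ζ N (fun s => φ s + ψ s) k = fourierCoeff ζ N φ k + fourierCoeff ζ N ψ k := by
  simp only [fourierCoeff, mul_add, sum_add_distrib]

lemma fourierCoeff_sum {ι : Type*} (t : Finset ι) (φ : ι → F → F) (k : ℤ) :
    fourierCoeff ζ N (fun s => ∑ i ∈ t, φ i s) k = ∑ i ∈ t, fourierCoeff ζ N (φ i) k := by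
  simp only [fourierCoeff, mul_sum]
  exact sum_comm

lemma fourierCoeff_quadratic_mul (hζ : ζ ≠ 0) (h₀ h₁ h₂ : F) (φ : F → F) (k : ℤ) :
    fourierCoeff ζ N (fun s => (h₀ + h₁ * s + h₂ * s ^ 2) * φ s) k =
      h₀ * fourierCoeff ζ N φ k + h₁ * fourierCoeff ζ N φ (k - 1) +
        h₂ * fourierCoeff ζ N φ (k - 2) := by
  simp only [fourierCoeff, mul_sum, ← sum_add_distrib]
  refine sum_congr rfl fun j _ => ?_
  have hs : ζ ^ j ≠ 0 := pow_ne_zero j hζ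
  have hk₁ : (ζ ^ j) ^ (-(k - 1)) = (ζ ^ j) ^ (-k) * ζ ^ j := by
    rw [neg_sub', sub_neg_eq_add, zpow_add_one₀ hs]
  have hk₂ : (ζ ^ j) ^ (-(k - 2)) = (ζ ^ j) ^ (-k) * (ζ ^ j) ^ 2 := by
    rw [neg_sub', sub_neg_eq_add, zpow_add₀ hs, zpow_ofNat]
  rw [hk₁, hk₂]
  ring

lemma fourierCoeff_eq_zero (hζ : IsPrimitiveRoot ζ N) {φ : F → F}
    (hφ : ∀ s, s ^ N = 1 → φ s = 0) (k : ℤ) : fourierCoeff ζ N φ k = 0 :=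
  sum_eq_zero fun j _ => by
    rw [hφ (ζ ^ j) (by rw [← pow_mul, mul_comm, pow_mul, hζ.pow_eq_one, one_pow]), mul_zero]

lemma fourierCoeff_monomial (hζ : IsPrimitiveRoot ζ N) (hN : N ≠ 0) (b : F) (e k : ℤ) :
    fourierCoeff ζ N (fun s => b * s ^ e) k = if (N : ℤ) ∣ e - k then N * b else 0 := by
  have hterm : ∀ j, (ζ ^ j) ^ (-k) * (b * (ζ ^ j) ^ e) = b * (ζ ^ (e - k)) ^ j := by
    intro j
    have hs : ζ ^ j ≠ 0 := pow_ne_zero j (hζ.ne_zero hN)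
    rw [mul_left_comm, ← zpow_add₀ hs, neg_add_eq_sub, ← zpow_natCast, ← zpow_natCast,
      ← zpow_mul, ← zpow_mul, mul_comm (j : ℤ)]
  simp only [fourierCoeff, hterm, ← mul_sum]
  split_ifs with hdvd
  · simp [(hζ.zpow_eq_one_iff_dvd _).2 hdvd, mul_comm]
  · have hne : ζ ^ (e - k) - 1 ≠ 0 :=
      sub_ne_zero.2 fun h => hdvd ((hζ.zpow_eq_one_iff_dvd _).1 h)
    have hpow : (ζ ^ (e - k)) ^ N = 1 := by
      rw [← zpow_natCast, zpow_comm, zpow_natCast, hζ.pow_eq_one, one_zpow]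
    have hgeom := mul_geom_sum (ζ ^ (e - k)) N
    rw [hpow, sub_self] at hgeom
    rw [(mul_eq_zero.1 hgeom).resolve_left hne, mul_zero]

lemma sum_ite_dvd_eq_zero {m : ℕ} {ψ : ℕ → F} {e : ℕ → ℤ}
    (he : ∀ i < m, e i ≠ 0 ∧ |e i| < N) :
    ∑ i ∈ range m, (if (N : ℤ) ∣ e i then ψ i else 0) = 0 :=
  sum_eq_zero fun i hi => if_neg fun hdvd =>
    (he i (mem_range.1 hi)).1 (Int.eq_zero_of_abs_lt_dvd hdvd (he i (mem_range.1 hi)).2)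

lemma sum_ite_dvd_eq_single {m i₀ : ℕ} (hi₀ : i₀ < m) {ψ : ℕ → F} {e : ℕ → ℤ} (he₀ : e i₀ = 0)
    (he : ∀ i < m, i ≠ i₀ → e i ≠ 0 ∧ |e i| < N) :
    ∑ i ∈ range m, (if (N : ℤ) ∣ e i then ψ i else 0) = ψ i₀ := by
  rw [sum_eq_single_of_mem i₀ (mem_range.2 hi₀) fun i hi hne => if_neg fun hdvd =>
      (he i (mem_range.1 hi) hne).1
        (Int.eq_zero_of_abs_lt_dvd hdvd (he i (mem_range.1 hi) hne).2),
    if_pos (he₀ ▸ dvd_zero _)]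

variable [CharP F 2]

lemma fourierCoeff_traceSum_monomial (hζ : IsPrimitiveRoot ζ N) (hN : Odd N) (m : ℕ) (b : F)
    (e k : ℤ) :
    fourierCoeff ζ N (fun s => traceSum m (b * s ^ e)) k =
      ∑ i ∈ range m, if (N : ℤ) ∣ e * 2 ^ i - k then b ^ 2 ^ i else 0 := by
  have hpow : ∀ i s, (b * s ^ e) ^ 2 ^ i = b ^ 2 ^ i * s ^ (e * 2 ^ i) := fun i s => by
    rw [mul_pow, zpow_mul, ← zpow_natCast (s ^ e)]
    norm_cast
  have hcast : (N : F) = 1 := by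
    rw [CharTwo.natCast_eq_ite, if_neg (Nat.not_even_iff_odd.2 hN)]
  simp only [traceSum, hpow, fourierCoeff_sum, fourierCoeff_monomial hζ hN.pos.ne', hcast, one_mul]

lemma fourierCoeff_const (hζ : IsPrimitiveRoot ζ N) (hN : Odd N) (b : F) (k : ℤ) :
    fourierCoeff ζ N (fun _ => b) k = if (N : ℤ) ∣ k then b else 0 := by
  have hcast : (N : F) = 1 := by
    rw [CharTwo.natCast_eq_ite, if_neg (Nat.not_even_iff_odd.2 hN)]
  simpa [hcast] using fourierCoeff_monomial hζ hN.pos.ne' b 0 k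

lemma fourierCoeff_traceSum_add_traceSum_inv (hζ : IsPrimitiveRoot ζ N) (hN : Odd N) (m : ℕ)
    (κ κ' τ : F) (k : ℤ) :
    fourierCoeff ζ N (fun s => traceSum m (κ * s) + traceSum m (κ' * s⁻¹) + τ) k =
      (∑ i ∈ range m, if (N : ℤ) ∣ 2 ^ i - k then κ ^ 2 ^ i else 0) +
        (∑ i ∈ range m, if (N : ℤ) ∣ -2 ^ i - k then κ' ^ 2 ^ i else 0) +
        if (N : ℤ) ∣ k then τ else 0 := by
  have hpos := fourierCoeff_traceSum_monomial hζ hN m κ 1 k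
  have hneg := fourierCoeff_traceSum_monomial hζ hN m κ' (-1) k
  simp only [zpow_one, one_mul] at hpos
  simp only [zpow_neg_one, neg_one_mul] at hneg
  rw [fourierCoeff_add, fourierCoeff_add, hpos, hneg, fourierCoeff_const hζ hN]

lemma fourierCoeff_traceSum_add_traceSum_inv_eq_zero (hζ : IsPrimitiveRoot ζ N) (hN : Odd N)
    {m : ℕ} (κ κ' τ : F) {k : ℤ} (hk : 0 < k) (hkN : ∀ i < m, 2 ^ i + k < N) (hkN' : k < N)
    (hne : ∀ i < m, 2 ^ i ≠ k) :
    fourierCoeff ζ N (fun s => traceSum m (κ * s) + traceSum m (κ' * s⁻¹) + τ) k = 0 := by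
  have hpos (i : ℕ) : (0 : ℤ) < 2 ^ i := by positivity
  rw [fourierCoeff_traceSum_add_traceSum_inv hζ hN, sum_ite_dvd_eq_zero, sum_ite_dvd_eq_zero,
    if_neg fun hdvd => (Int.le_of_dvd hk hdvd).not_gt hkN', add_zero, add_zero]
  · intro i hi
    have := hpos i
    have := hkN i hi
    exact ⟨by omega, abs_lt.2 ⟨by omega, by omega⟩⟩
  · intro i hi
    have := hpos i
    have := hkN i hi
    exact ⟨sub_ne_zero.2 (hne i hi), abs_lt.2 ⟨by omega, by omega⟩⟩

lemma fourierCoeff_traceSum_add_traceSum_inv_two_pow (hζ : IsPrimitiveRoot ζ N) (hN : Odd N)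
    {m j : ℕ} (κ κ' τ : F) (hj : j < m) (hjN : ∀ i < m, (2 ^ i + 2 ^ j : ℤ) < N) :
    fourierCoeff ζ N (fun s => traceSum m (κ * s) + traceSum m (κ' * s⁻¹) + τ) (2 ^ j) =
      κ ^ 2 ^ j := by
  have hpos (i : ℕ) : (0 : ℤ) < 2 ^ i := by positivity
  have hjN' : ¬ (N : ℤ) ∣ 2 ^ j := fun hdvd => by
    have := Int.le_of_dvd (hpos j) hdvd
    have := hjN j hj
    have := hpos j
    omega
  rw [fourierCoeff_traceSum_add_traceSum_inv hζ hN, sum_ite_dvd_eq_single hj (sub_self _),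
    sum_ite_dvd_eq_zero, if_neg hjN', add_zero, add_zero]
  · intro i hi
    have := hpos i
    have := hpos j
    have := hjN i hi
    exact ⟨by omega, abs_lt.2 ⟨by omega, by omega⟩⟩
  · intro i hi hne
    have := hpos i
    have := hpos j
    have := hjN i hi
    refine ⟨sub_ne_zero.2 fun heq => hne (Nat.pow_right_injective le_rfl (mod_cast heq)),
      abs_lt.2 ⟨by omega, by omega⟩⟩

lemma fourierCoeff_recurrence_of_quadratic_eq_zero_or (hζ : IsPrimitiveRoot ζ N) (hN : N ≠ 0)
    {h₀ h₁ h₂ τ : F} {φ : F → F}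
    (h : ∀ s, s ^ N = 1 → h₀ + h₁ * s + h₂ * s ^ 2 = 0 ∨ φ s = τ) (k : ℤ) :
    h₀ * fourierCoeff ζ N (fun s => φ s + τ) k +
      h₁ * fourierCoeff ζ N (fun s => φ s + τ) (k - 1) +
        h₂ * fourierCoeff ζ N (fun s => φ s + τ) (k - 2) = 0 := by
  rw [← fourierCoeff_quadratic_mul (hζ.ne_zero hN)]
  refine fourierCoeff_eq_zero hζ (fun s hs => ?_) k
  rcases h s hs with hs | hs
  · rw [hs, zero_mul]
  · rw [hs, CharTwo.add_self_eq_zero, mul_zero]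

lemma coeff_eq_zero_of_quadratic_eq_zero_or_traceSum {m : ℕ} (hm : 4 ≤ m)
    (hN : N = 2 ^ m + 1 ∨ N = 2 ^ m - 1) (hζ : IsPrimitiveRoot ζ N) {h₀ h₁ h₂ κ κ' τ : F}
    (hh₁ : h₁ ≠ 0)
    (h : ∀ s, s ^ N = 1 → h₀ + h₁ * s + h₂ * s ^ 2 = 0 ∨
      traceSum m (κ * s) + traceSum m (κ' * s⁻¹) = τ) : κ = 0 := by
  obtain ⟨n, rfl⟩ := Nat.exists_eq_add_of_le' hm
  obtain ⟨r, hr⟩ : ∃ r, r = 2 ^ n := ⟨_, rfl⟩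
  have hr_pos : 0 < r := hr ▸ Nat.two_pow_pos n
  have hm16 : 2 ^ (n + 4) = 16 * r := by rw [pow_add, hr, mul_comm]; rfl
  have hm4 : (2 ^ (n + 2) : ℤ) = 4 * r := by rw [pow_add, hr, mul_comm]; norm_num
  have hN_odd : Odd N := by rw [Nat.odd_iff]; omega
  have hpow : ∀ i < n + 4, (2 ^ i : ℤ) ≤ 8 * r ∧ ((2 ^ i : ℤ) = 1 ∨ (2 : ℤ) ∣ 2 ^ i) :=
    fun i hi => by exact_mod_cast two_pow_le_and_parity hm16 hi
  -- `2 ^ (m - 2)` is a power of two, its two neighbours are not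
  have hrec := fourierCoeff_recurrence_of_quadratic_eq_zero_or hζ hN_odd.pos.ne' h
    (2 ^ (n + 2) + 1)
  rw [add_sub_cancel_right,
    fourierCoeff_traceSum_add_traceSum_inv_two_pow hζ hN_odd κ κ' τ (by omega)
      (fun i hi => by grind),
    fourierCoeff_traceSum_add_traceSum_inv_eq_zero hζ hN_odd κ κ' τ (by omega)
      (fun i hi => by grind) (by omega) (fun i hi => by grind),
    fourierCoeff_traceSum_add_traceSum_inv_eq_zero hζ hN_odd κ κ' τ (by omega)
      (fun i hi => by grind) (by omega) (fun i hi => by grind),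
    mul_zero, mul_zero, zero_add, add_zero] at hrec
  exact eq_zero_of_pow_eq_zero ((mul_eq_zero.1 hrec).resolve_left hh₁)

lemma eq_zero_of_quadratic_eq_zero_or_traceSum {m : ℕ} (hm : 4 ≤ m)
    (hN : N = 2 ^ m + 1 ∨ N = 2 ^ m - 1) (hζ : IsPrimitiveRoot ζ N) {h₀ h₁ h₂ κ κ' τ : F}
    (hh₁ : h₁ ≠ 0)
    (h : ∀ s, s ^ N = 1 → h₀ + h₁ * s + h₂ * s ^ 2 = 0 ∨
      traceSum m (κ * s) + traceSum m (κ' * s⁻¹) = τ) : κ = 0 ∧ κ' = 0 ∧ τ = 0 := by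
  have h16 : 2 ^ 4 ≤ 2 ^ m := Nat.pow_le_pow_right two_pos hm
  have hN_odd : Odd N := by
    have : Even (2 ^ m) := (even_two.pow_of_ne_zero (by omega))
    grind
  have hκ := coeff_eq_zero_of_quadratic_eq_zero_or_traceSum hm hN hζ hh₁ h
  have hκ' : κ' = 0 := by
    refine coeff_eq_zero_of_quadratic_eq_zero_or_traceSum (h₀ := h₂) (h₂ := h₀) (κ' := κ) (τ := τ)
      hm hN hζ hh₁ fun s hs => ?_
    have hs0 : s ≠ 0 := by rintro rfl; simp [hN_odd.pos.ne'] at hs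
    rcases h s⁻¹ (by rw [inv_pow, hs, inv_one]) with hq | ht
    · left
      field_simp at hq
      linear_combination hq
    · right
      rwa [inv_inv, add_comm] at ht
  refine ⟨hκ, hκ', ?_⟩
  have hconst : ∀ s, s ^ N = 1 → h₀ + h₁ * s + h₂ * s ^ 2 = 0 ∨ (fun _ => 0) s = τ := by
    simpa [hκ, hκ', traceSum] using h
  have hrec := fourierCoeff_recurrence_of_quadratic_eq_zero_or hζ hN_odd.pos.ne' hconst 1
  have hN1 : ¬ (N : ℤ) ∣ 1 := fun hdvd => by have := Int.le_of_dvd one_pos hdvd; omega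
  have hN1' : ¬ (N : ℤ) ∣ 1 - 2 := by norm_num; exact hN1
  simp only [zero_add, fourierCoeff_const hζ hN_odd, sub_self, dvd_zero, if_true, hN1, hN1',
    if_false, mul_zero, add_zero] at hrec
  exact (mul_eq_zero.1 hrec).resolve_left hh₁

lemma cubic_coeff_eq_zero_of_linear_eq_zero_or_traceSum {m : ℕ} (hm : 4 ≤ m)
    (hζ : IsPrimitiveRoot ζ (2 ^ m - 1)) {h₀ h₁ κ l τ : F} (hh₁ : h₁ ≠ 0)
    (h : ∀ s, s ^ (2 ^ m - 1) = 1 → h₀ + h₁ * s = 0 ∨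
      traceSum m (κ * s ^ 3) + traceSum m (l * s) = τ) : κ = 0 := by
  obtain ⟨n, rfl⟩ := Nat.exists_eq_add_of_le' hm
  obtain ⟨r, hr⟩ : ∃ r, r = 2 ^ n := ⟨_, rfl⟩
  have hr_pos : 0 < r := hr ▸ Nat.two_pow_pos n
  have hm16 : 2 ^ (n + 4) = 16 * r := by rw [pow_add, hr, mul_comm]; rfl
  have hm4 : (2 ^ (n + 2) : ℤ) = 4 * r := by rw [pow_add, hr, mul_comm]; norm_num
  rw [hm16] at hζ h
  have hN_odd : Odd (16 * r - 1) := by rw [Nat.odd_iff]; omega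
  have hle : ∀ i < n + 4, (0 : ℤ) < 2 ^ i ∧ (2 ^ i : ℤ) ≤ 8 * r := fun i hi =>
    ⟨by positivity, by exact_mod_cast (two_pow_le_and_parity hm16 hi).1⟩
  have hinj : ∀ i ≠ n + 2, (2 ^ i : ℤ) ≠ 4 * r := fun i hi heq =>
    hi (Nat.pow_right_injective le_rfl (mod_cast heq.trans hm4.symm))
  have hcubic := fourierCoeff_traceSum_monomial hζ hN_odd (n + 4) κ 3
  have hlinear := fourierCoeff_traceSum_monomial hζ hN_odd (n + 4) l 1
  simp only [zpow_ofNat] at hcubic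
  simp only [zpow_one, one_mul] at hlinear
  have hrec := fourierCoeff_recurrence_of_quadratic_eq_zero_or hζ hN_odd.pos.ne'
    (h₀ := h₀) (h₁ := h₁) (h₂ := 0) (by simpa using h) (12 * r + 1)
  have hcast : ((16 * r - 1 : ℕ) : ℤ) = 16 * r - 1 := by omega
  simp only [fourierCoeff_add, hcubic, hlinear, fourierCoeff_const hζ hN_odd, add_sub_cancel_right,
    zero_mul, add_zero] at hrec
  rw [sum_ite_dvd_eq_zero (fun i hi => by grind), sum_ite_dvd_eq_zero (fun i hi => by grind),
    sum_ite_dvd_eq_single (i₀ := n + 2) (by omega) (by grind) (fun i hi hne => by grind),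
    sum_ite_dvd_eq_zero (fun i hi => by grind), if_neg, if_neg] at hrec
  · simp only [add_zero, mul_zero, zero_add] at hrec
    exact eq_zero_of_pow_eq_zero ((mul_eq_zero.1 hrec).resolve_left hh₁)
  all_goals exact fun hdvd => by have := Int.le_of_dvd (by omega) hdvd; omega

end FourierCoeff

section TraceSum

variable {F : Type*} [Field F]

lemma traceSum_zero (m : ℕ) : traceSum m (0 : F) = 0 := by simp [traceSum]

variable [CharP F 2]

lemma traceSum_add (m : ℕ) (x y : F) : traceSum m (x + y) = traceSum m x + traceSum m y := by
  simp only [traceSum, add_pow_char_pow, sum_add_distrib]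

lemma traceSum_sq (m : ℕ) (x : F) : traceSum m (x ^ 2) = traceSum m x ^ 2 := by
  simp only [traceSum, CharTwo.sum_sq, ← pow_mul, mul_comm]

lemma traceSum_sq_add_self (m : ℕ) (x : F) : traceSum m (x ^ 2 + x) = x ^ 2 ^ m + x := by
  calc traceSum m (x ^ 2 + x) = ∑ i ∈ range m, (x ^ 2 ^ (i + 1) - x ^ 2 ^ i) := by
        rw [traceSum_add, traceSum_sq, traceSum, CharTwo.sum_sq, ← sum_add_distrib]
        simp only [CharTwo.sub_eq_add, ← pow_mul, ← pow_succ]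
    _ = x ^ 2 ^ m + x := by
        rw [sum_range_sub (fun i => x ^ 2 ^ i), CharTwo.sub_eq_add, pow_zero, pow_one]

lemma mem_range_algebraMap_of_pow_natCard_eq {F K : Type*} [Field F] [Finite F] [Field K]
    [Algebra F K] {x : K} (hx : x ^ Nat.card F = x) : x ∈ (algebraMap F K).range := by
  refine Polynomial.splits_X_pow_nat_card_sub_X.mem_range_of_isRoot
    (FiniteField.X_pow_card_sub_X_ne_zero F Finite.one_lt_card) ?_
  simp [hx]

lemma exists_sq_add_self_eq_of_traceSum_eq_zero {n : ℕ} (hn : Nat.card F = 2 ^ n) {r : F}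
    (hr : traceSum n r = 0) : ∃ y, y ^ 2 + y = r := by
  have : Finite F := Nat.finite_of_card_ne_zero (hn ▸ (Nat.two_pow_pos n).ne')
  let K := AlgebraicClosure F
  have : CharP K 2 := charP_of_injective_algebraMap (algebraMap F K).injective 2
  obtain ⟨y, hy⟩ : ∃ y : K, y ^ 2 + y = algebraMap F K r := by
    obtain ⟨y, hy⟩ := IsAlgClosed.exists_root
      (Polynomial.X ^ 2 + Polynomial.X + Polynomial.C (algebraMap F K r))
      (by rw [show Polynomial.degree _ = 2 by compute_degree!]; decide)
    exact ⟨y, CharTwo.add_eq_zero.1 (by simpa using hy)⟩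
  have hyF : y ^ Nat.card F = y := by
    rw [hn, ← CharTwo.add_eq_zero, ← traceSum_sq_add_self, hy]
    simpa [traceSum] using congrArg (algebraMap F K) hr
  obtain ⟨x, rfl⟩ := mem_range_algebraMap_of_pow_natCard_eq hyF
  exact ⟨x, (algebraMap F K).injective (by simpa using hy)⟩

end TraceSum

lemma exists_ne_zero_eq_mul_apply {F : Type*} [Field F] [CharP F 2] {σ : F →+* F} {w : F}
    (hw : w * σ w = 1) : ∃ z, z ≠ 0 ∧ z = w * σ z := by
  by_cases hw1 : w = 1
  · exact ⟨1, one_ne_zero, by simp [hw1]⟩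
  · exact ⟨1 + w, fun h => hw1 (CharTwo.add_eq_zero.1 h).symm, by
      rw [map_add, map_one, mul_add, mul_one, hw, add_comm]⟩

/-- `σ` is the conjugation `x ↦ x ^ q` of a field with `q ^ 2` elements, `q = 2 ^ m`. -/
structure IsConjugation {F : Type*} [Field F] (σ : F →+* F) (m : ℕ) : Prop where
  apply_eq : ∀ x, σ x = x ^ 2 ^ m
  natCard : Nat.card F = 2 ^ (2 * m)

lemma isConjugation_iterateFrobenius {F : Type*} [Field F] [Fintype F] [CharP F 2] {m : ℕ}
    (hcard : Fintype.card F = 2 ^ (2 * m)) : IsConjugation (iterateFrobenius F 2 m) m where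
  apply_eq := iterateFrobenius_def 2 m
  natCard := by rw [Nat.card_eq_fintype_card, hcard]

namespace IsConjugation

variable {F : Type*} [Field F] {σ : F →+* F} {m : ℕ}

lemma finite (hσ : IsConjugation σ m) : Finite F :=
  Nat.finite_of_card_ne_zero (hσ.natCard ▸ (Nat.two_pow_pos _).ne')

lemma involutive (hσ : IsConjugation σ m) : Function.Involutive σ := by
  intro x
  have := hσ.finite
  have := Fintype.ofFinite F
  rw [hσ.apply_eq, hσ.apply_eq, ← pow_mul, ← pow_add, ← two_mul, ← hσ.natCard,
    Nat.card_eq_fintype_card, FiniteField.pow_card]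

lemma exists_isPrimitiveRoot (hσ : IsConjugation σ m) {N : ℕ}
    (hN : N = 2 ^ m + 1 ∨ N = 2 ^ m - 1) : ∃ ζ : F, IsPrimitiveRoot ζ N := by
  have := hσ.finite
  obtain ⟨g, hg⟩ := IsCyclic.exists_ofOrder_eq_natCard (α := Fˣ)
  have hcard : Nat.card Fˣ = (2 ^ m + 1) * (2 ^ m - 1) := by
    rw [Nat.card_units, hσ.natCard, mul_comm 2 m, pow_mul]
    simpa using Nat.sq_sub_sq (2 ^ m) 1
  have hprim : IsPrimitiveRoot (g : F) (Nat.card Fˣ) :=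
    IsPrimitiveRoot.coe_units_iff.2 (hg ▸ IsPrimitiveRoot.orderOf g)
  rcases hN with rfl | rfl
  · exact ⟨_, hprim.pow Nat.card_pos (by rw [hcard, mul_comm])⟩
  · exact ⟨_, hprim.pow Nat.card_pos hcard⟩

lemma mul_apply_eq_one_iff (hσ : IsConjugation σ m) {x : F} :
    x * σ x = 1 ↔ x ^ (2 ^ m + 1) = 1 := by
  rw [hσ.apply_eq, pow_succ']

lemma apply_eq_self_of_pow_eq_one (hσ : IsConjugation σ m) {x : F} (hx : x ^ (2 ^ m - 1) = 1) :
    σ x = x := by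
  rw [hσ.apply_eq, ← Nat.sub_add_cancel (Nat.one_le_two_pow (n := m)), pow_succ, hx, one_mul]

lemma exists_apply_eq_self_ne_ne (hσ : IsConjugation σ m) (hm : 2 ≤ m) (x y : F) :
    ∃ t, σ t = t ∧ t ≠ x ∧ t ≠ y := by
  obtain ⟨ζ, hζ⟩ := hσ.exists_isPrimitiveRoot (Or.inr rfl)
  have : 2 ^ 2 ≤ 2 ^ m := Nat.pow_le_pow_right two_pos hm
  have hζ0 : ζ ≠ 0 := hζ.ne_zero (by omega)
  have hζ1 : ζ ≠ 1 := hζ.ne_one (by omega)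
  by_contra! hcon
  have hcover : ∀ t, σ t = t → t = x ∨ t = y := fun t ht => or_iff_not_imp_left.2 (hcon t ht)
  have hζfix := hσ.apply_eq_self_of_pow_eq_one hζ.pow_eq_one
  rcases hcover 0 (map_zero σ) with rfl | rfl <;> rcases hcover 1 (map_one σ) with h1 | h1 <;>
    rcases hcover ζ hζfix with h | h <;> simp_all

variable [CharP F 2]

lemma exists_apply_ne_self (hσ : IsConjugation σ m) : ∃ ω : F, σ ω ≠ ω := by
  obtain ⟨ζ, hζ⟩ := hσ.exists_isPrimitiveRoot (Or.inl rfl)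
  refine ⟨ζ, fun hfix => hζ.ne_one (by simp) ?_⟩
  have hnorm := hσ.mul_apply_eq_one_iff.2 hζ.pow_eq_one
  rwa [hfix, ← sq, ← one_pow 2, CharTwo.sq_inj] at hnorm

lemma exists_sq_eq (hσ : IsConjugation σ m) (x : F) : ∃ y, y ^ 2 = x := by
  have := hσ.finite
  obtain ⟨y, hy⟩ := FiniteField.isSquare_of_char_two (ringChar.eq F 2) x
  exact ⟨y, by rw [hy, sq]⟩

lemma exists_apply_eq_self_pow_four_eq (hσ : IsConjugation σ m) {x : F} (hx : σ x = x) :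
    ∃ y, σ y = y ∧ y ^ 4 = x := by
  have hsqrt {x : F} (hx : σ x = x) : ∃ y, σ y = y ∧ y ^ 2 = x := by
    obtain ⟨y, rfl⟩ := hσ.exists_sq_eq x
    exact ⟨y, by rwa [map_pow, CharTwo.sq_inj] at hx, rfl⟩
  obtain ⟨z, hz, rfl⟩ := hsqrt hx
  obtain ⟨y, hy, rfl⟩ := hsqrt hz
  exact ⟨y, hy, by rw [← pow_mul]⟩

lemma traceSum_sq_of_apply_eq_self (hσ : IsConjugation σ m) {x : F} (hx : σ x = x) :
    traceSum m (x ^ 2) = traceSum m x := by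
  rw [← CharTwo.add_eq_zero, ← traceSum_add, traceSum_sq_add_self, ← hσ.apply_eq, hx,
    CharTwo.add_self_eq_zero]

lemma traceSum_eq_zero_or_one (hσ : IsConjugation σ m) {x : F} (hx : σ x = x) :
    traceSum m x = 0 ∨ traceSum m x = 1 := by
  have hidem := hσ.traceSum_sq_of_apply_eq_self hx
  rw [traceSum_sq] at hidem
  rw [← IsIdempotentElem.iff_eq_zero_or_one, IsIdempotentElem, ← sq, hidem]

lemma exists_sq_add_self_eq (hσ : IsConjugation σ m) {r : F} (hr : σ r = r) :
    ∃ y, y ^ 2 + y = r ∧ σ y = y + traceSum m r := by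
  have htrace : traceSum (2 * m) r = 0 := by
    have hshift (i : ℕ) : r ^ 2 ^ (m + i) = r ^ 2 ^ i := by
      rw [pow_add, pow_mul, ← hσ.apply_eq, hr]
    simp only [traceSum, two_mul m, sum_range_add, hshift, CharTwo.add_self_eq_zero]
  obtain ⟨y, rfl⟩ := exists_sq_add_self_eq_of_traceSum_eq_zero hσ.natCard htrace
  exact ⟨y, rfl, by rw [traceSum_sq_add_self, hσ.apply_eq, add_left_comm,
    CharTwo.add_self_eq_zero, add_zero]⟩

end IsConjugation

section Forms

variable {F : Type*} [Field F]

/-- The form `c₀ z₁² a₁ + c₁ z₁² a₂ + c₂ z₂² a₁ + c₃ z₂² a₂`, which is Frobenius-semilinear in `z`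
and linear in `a`. -/
def semiBilin (c : Fin 4 → F) (z a : F × F) : F :=
  c 0 * z.1 ^ 2 * a.1 + c 1 * z.1 ^ 2 * a.2 + c 2 * z.2 ^ 2 * a.1 + c 3 * z.2 ^ 2 * a.2

/-- The Plücker coordinates of the plane spanned by `c` and `d`, in characteristic two. -/
def plucker (c d : Fin 4 → F) (i j : Fin 4) : F := c i * d j + c j * d i

/-- The middle coefficient of both `quad` and `quart`; it is `θ₁` of the classification. -/
def theta (c d : Fin 4 → F) : F := plucker c d 0 3 + plucker c d 1 2

/-- The quadratic form whose vanishing at `v` means that `semiBilin c · v` and `semiBilin d · v`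
have a common zero. -/
def quad (c d : Fin 4 → F) (v : F × F) : F :=
  plucker c d 0 2 * v.1 ^ 2 + theta c d * v.1 * v.2 + plucker c d 1 3 * v.2 ^ 2

/-- The quartic form whose vanishing at `v` means that `semiBilin c v ·` and `semiBilin d v ·`
have a common zero. -/
def quart (c d : Fin 4 → F) (v : F × F) : F :=
  plucker c d 0 1 * v.1 ^ 4 + theta c d * v.1 ^ 2 * v.2 ^ 2 + plucker c d 2 3 * v.2 ^ 4

/-- The leading coefficient of `resolvent c d v`. -/
def lead (c d : Fin 4 → F) (v : F × F) : F :=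
  plucker c d 0 1 * v.1 ^ 2 + plucker c d 0 2 * v.1 * v.2 + plucker c d 1 2 * v.2 ^ 2

/-- The trailing coefficient of `resolvent c d v`. -/
def trail (c d : Fin 4 → F) (v : F × F) : F :=
  plucker c d 1 2 * v.1 ^ 2 + plucker c d 1 3 * v.1 * v.2 + plucker c d 2 3 * v.2 ^ 2

/-- The binary quadratic form in `w` measuring, for `w` independent of `v`, whether
`semiBilin c w v / semiBilin c v w` and `semiBilin d w v / semiBilin d v w` agree. -/
def resolvent (c d : Fin 4 → F) (v w : F × F) : F :=
  lead c d v * w.1 ^ 2 + quad c d v * w.1 * w.2 + trail c d v * w.2 ^ 2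

/-- The Artin–Schreier invariant `αγ / β²` of the quadratic form `αX² + βXY + γY²` that
`resolvent c d v` is. -/
def disc (c d : Fin 4 → F) (v : F × F) : F := lead c d v * trail c d v / quad c d v ^ 2

/-- The determinant of the pair `v`, `w`, in characteristic two. -/
def det (v w : F × F) : F := v.1 * w.2 + v.2 * w.1

/-- The point with coordinates `z` in the basis `v`, `w`. -/
def basisMap (v w z : F × F) : F × F := z.1 • v + z.2 • w

/-- The coefficients of `semiBilin c` in the basis `v`, `w`. -/
def transform (c : Fin 4 → F) (v w : F × F) : Fin 4 → F :=
  ![semiBilin c v v, semiBilin c v w, semiBilin c w v, semiBilin c w w]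

lemma semiBilin_smul_left (c : Fin 4 → F) (t : F) (z a : F × F) :
    semiBilin c (t • z) a = t ^ 2 * semiBilin c z a := by
  simp only [semiBilin, Prod.smul_fst, Prod.smul_snd, smul_eq_mul]
  ring

lemma semiBilin_smul_right (c : Fin 4 → F) (t : F) (z a : F × F) :
    semiBilin c z (t • a) = t * semiBilin c z a := by
  simp only [semiBilin, Prod.smul_fst, Prod.smul_snd, smul_eq_mul]
  ring

lemma semiBilin_zero_left (c : Fin 4 → F) (a : F × F) : semiBilin c 0 a = 0 := by
  simp [semiBilin]

lemma semiBilin_add_right (c : Fin 4 → F) (z a b : F × F) :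
    semiBilin c z (a + b) = semiBilin c z a + semiBilin c z b := by
  simp only [semiBilin, Prod.fst_add, Prod.snd_add]
  ring

variable [CharP F 2] (c d : Fin 4 → F) (v w : F × F)

lemma semiBilin_add_left (z z' a : F × F) :
    semiBilin c (z + z') a = semiBilin c z a + semiBilin c z' a := by
  simp only [semiBilin, Prod.fst_add, Prod.snd_add, CharTwo.add_sq]
  ring

lemma mul_plucker_eq (i j k : Fin 4) :
    c i * plucker c d j k = c j * plucker c d i k + c k * plucker c d i j := by
  simp only [plucker]
  grind

lemma plucker_relation (i j k l : Fin 4) :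
    plucker c d i j * plucker c d k l =
      plucker c d i k * plucker c d j l + plucker c d i l * plucker c d j k := by
  simp only [plucker]
  grind

lemma semiBilin_transform (z a : F × F) :
    semiBilin (transform c v w) z a = semiBilin c (basisMap v w z) (basisMap v w a) := by
  simp only [basisMap, semiBilin_add_left, semiBilin_add_right, semiBilin_smul_left,
    semiBilin_smul_right]
  simp only [semiBilin, transform, Matrix.cons_val]
  ring

lemma basisMap_injective (hdet : det v w ≠ 0) : Function.Injective (basisMap v w) := by
  intro z a h
  simp only [basisMap, Prod.ext_iff, Prod.fst_add, Prod.snd_add, Prod.smul_fst, Prod.smul_snd,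
    smul_eq_mul] at h
  simp only [det] at hdet
  have h₁ : z.1 = a.1 := mul_right_cancel₀ hdet (by grind)
  have h₂ : z.2 = a.2 := mul_right_cancel₀ hdet (by grind)
  exact Prod.ext h₁ h₂

lemma semiBilin_mul_add_semiBilin_mul :
    semiBilin c w v * semiBilin d v w + semiBilin c v w * semiBilin d w v =
      det v w * resolvent c d v w := by
  simp only [semiBilin, det, resolvent, lead, quad, trail, theta, plucker]
  grind

lemma plucker_transform_one_two :
    plucker (transform c v w) (transform d v w) 1 2 = det v w * resolvent c d v w := by
  rw [← semiBilin_mul_add_semiBilin_mul]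
  simp only [plucker, transform, Matrix.cons_val]
  ring

lemma plucker_transform_zero_two :
    plucker (transform c v w) (transform d v w) 0 2 = det v w ^ 2 * quad c d v := by
  simp only [transform, Matrix.cons_val, semiBilin, det, quad, theta, plucker]
  grind

lemma plucker_transform_one_three :
    plucker (transform c v w) (transform d v w) 1 3 = det v w ^ 2 * quad c d w := by
  simp only [transform, Matrix.cons_val, semiBilin, det, quad, theta, plucker]
  grind

lemma plucker_transform_two_three :
    plucker (transform c v w) (transform d v w) 2 3 = det v w * quart c d w := by
  simp only [transform, Matrix.cons_val, semiBilin, det, quart, theta, plucker]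
  grind

lemma theta_transform :
    theta (transform c v w) (transform d v w) = det v w ^ 3 * theta c d := by
  simp only [transform, Matrix.cons_val, semiBilin, det, theta, plucker]
  grind

lemma sq_mul_quart_of_det_eq_zero (hdet : det v w = 0) :
    w.1 ^ 2 * quart c d v = v.1 ^ 2 * resolvent c d v w ∧
      w.2 ^ 2 * quart c d v = v.2 ^ 2 * resolvent c d v w := by
  simp only [det, quart, resolvent, lead, quad, trail, theta] at *
  constructor <;> grind

lemma sq_mul_quad :
    w.1 ^ 2 * quad c d v =
      (d 2 * v.1 + d 3 * v.2) * semiBilin c w v + (c 2 * v.1 + c 3 * v.2) * semiBilin d w v ∧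
    w.2 ^ 2 * quad c d v =
      (d 0 * v.1 + d 1 * v.2) * semiBilin c w v + (c 0 * v.1 + c 1 * v.2) * semiBilin d w v := by
  simp only [semiBilin, quad, theta, plucker]
  constructor <;> grind

lemma mul_quart :
    w.1 * quart c d v = (d 1 * v.1 ^ 2 + d 3 * v.2 ^ 2) * semiBilin c v w +
      (c 1 * v.1 ^ 2 + c 3 * v.2 ^ 2) * semiBilin d v w ∧
    w.2 * quart c d v = (d 0 * v.1 ^ 2 + d 2 * v.2 ^ 2) * semiBilin c v w +
      (c 0 * v.1 ^ 2 + c 2 * v.2 ^ 2) * semiBilin d v w := by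
  simp only [semiBilin, quart, theta, plucker]
  constructor <;> grind

end Forms

section APNOn

variable {F : Type*} [Field F]

/-- The APN property of `v ↦ semiBilin c v v` on `V`: the polarization of this cubic at a nonzero
`v ∈ V` vanishes on `V` only at `0` and `v`. -/
def IsAPNOn (V : Set (F × F)) (c : Fin 4 → F) : Prop :=
  ∀ v ∈ V, v ≠ 0 → ∀ w ∈ V, semiBilin c w v + semiBilin c v w = 0 → w = 0 ∨ w = v

/-- `V` is stable under scalars fixed by `σ`, and on `V` the form with coefficients `d` is the
conjugate of the form with coefficients `c`. -/
structure IsConjPair (σ : F →+* F) (V : Set (F × F)) (c d : Fin 4 → F) : Prop where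
  smul_mem : ∀ t, σ t = t → ∀ v ∈ V, t • v ∈ V
  apply_semiBilin : ∀ v ∈ V, ∀ w ∈ V, σ (semiBilin c v w) = semiBilin d v w

variable {σ : F →+* F} {V V' : Set (F × F)} {c d : Fin 4 → F} {v w : F × F}

namespace IsAPNOn

lemma semiBilin_self_ne_zero (h : IsAPNOn V c) (hcd : IsConjPair σ V c d) {t : F} (hσ : σ t = t)
    (ht0 : t ≠ 0) (ht1 : t ≠ 1) (hv : v ∈ V) (hv0 : v ≠ 0) : semiBilin c v v ≠ 0 := by
  intro hvv
  have hzero : semiBilin c (t • v) v + semiBilin c v (t • v) = 0 := by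
    simp [semiBilin_smul_left, semiBilin_smul_right, hvv]
  rcases h v hv hv0 _ (hcd.smul_mem t hσ v hv) hzero with htv | htv
  · exact (smul_ne_zero ht0 hv0) htv
  · exact ht1 (smul_left_injective F hv0 (htv.trans (one_smul F v).symm))

variable [CharP F 2]

lemma transform (h : IsAPNOn V c) (hdet : det v w ≠ 0) (hmap : Set.MapsTo (basisMap v w) V' V) :
    IsAPNOn V' (transform c v w) := by
  intro a ha ha0 z hz hza
  have hinj := basisMap_injective v w hdet
  have hzero : basisMap v w 0 = 0 := by simp [basisMap]
  simp only [semiBilin_transform] at hza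
  rcases h _ (hmap ha) (fun h0 => ha0 (hinj (h0.trans hzero.symm))) _ (hmap hz) hza with h0 | h1
  · exact Or.inl (hinj (h0.trans hzero.symm))
  · exact Or.inr (hinj h1)

lemma of_transform (h : IsAPNOn V' (KimAPN.transform c v w))
    (hsurj : Set.SurjOn (basisMap v w) V' V) : IsAPNOn V c := by
  intro a ha ha0 z hz hza
  have hzero : basisMap v w 0 = 0 := by simp [basisMap]
  obtain ⟨a, haV, rfl⟩ := hsurj ha
  obtain ⟨z, hzV, rfl⟩ := hsurj hz
  simp only [← semiBilin_transform] at hza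
  rcases h a haV (fun h0 => ha0 (h0 ▸ hzero)) z hzV hza with rfl | rfl
  · exact Or.inl hzero
  · exact Or.inr rfl

-- A `σ`-fixed ratio `t` of the two values makes the polarization at `v` vanish at `t • w`.
lemma det_eq_zero (h : IsAPNOn V c) (hcd : IsConjPair σ V c d) (hv : v ∈ V) (hw : w ∈ V)
    (hwv : semiBilin c w v ≠ 0) (hvw : semiBilin c v w ≠ 0)
    (hratio : semiBilin c w v * semiBilin d v w + semiBilin c v w * semiBilin d w v = 0) :
    det v w = 0 := by
  have hv0 : v ≠ 0 := by
    rintro rfl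
    exact hvw (semiBilin_zero_left c w)
  have hw0 : w ≠ 0 := by
    rintro rfl
    exact hwv (semiBilin_zero_left c v)
  obtain ⟨t, ht⟩ : ∃ t, semiBilin c v w = t * semiBilin c w v := ⟨_, (div_mul_cancel₀ _ hwv).symm⟩
  have hσ : σ t = t := by
    have hdvw := congrArg σ ht
    have hdwv := (map_ne_zero σ).2 hwv
    rw [map_mul, hcd.apply_semiBilin v hv w hw] at hdvw
    rw [hcd.apply_semiBilin w hw v hv] at hdwv hdvw
    refine mul_right_cancel₀ (mul_ne_zero hwv hdwv) ?_
    rw [ht, hdvw] at hratio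
    linear_combination CharTwo.add_eq_zero.1 hratio
  have hzero : semiBilin c (t • w) v + semiBilin c v (t • w) = 0 := by
    rw [semiBilin_smul_left, semiBilin_smul_right, ht, ← mul_assoc, ← sq, CharTwo.add_self_eq_zero]
  rcases h v hv hv0 _ (hcd.smul_mem t hσ w hw) hzero with htw | htw
  · rcases smul_eq_zero.1 htw with rfl | rfl
    · exact absurd (ht.trans (zero_mul _)) hvw
    · exact absurd rfl hw0
  · rw [← htw, det, Prod.smul_fst, Prod.smul_snd, smul_eq_mul, smul_eq_mul, mul_right_comm,
      CharTwo.add_self_eq_zero]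

lemma quad_eq_zero_or_quart_eq_zero (h : IsAPNOn V c) (hcd : IsConjPair σ V c d) (hv : v ∈ V)
    (hw : w ∈ V) (hw0 : w ≠ 0) (hres : resolvent c d v w = 0) :
    quad c d v = 0 ∨ quart c d v = 0 := by
  have hcancel {x : F} {k : ℕ} (h₁ : w.1 ^ k * x = 0) (h₂ : w.2 ^ k * x = 0) : x = 0 := by
    by_contra hx
    simp only [mul_eq_zero, hx, or_false] at h₁ h₂
    exact hw0 (Prod.ext (eq_zero_of_pow_eq_zero h₁) (eq_zero_of_pow_eq_zero h₂))
  by_cases hwv : semiBilin c w v = 0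
  · have hwv' : semiBilin d w v = 0 := by rw [← hcd.apply_semiBilin w hw v hv, hwv, map_zero]
    obtain ⟨h₁, h₂⟩ := sq_mul_quad c d v w
    simp only [hwv, hwv', mul_zero, add_zero] at h₁ h₂
    exact Or.inl (hcancel h₁ h₂)
  by_cases hvw : semiBilin c v w = 0
  · have hvw' : semiBilin d v w = 0 := by rw [← hcd.apply_semiBilin v hv w hw, hvw, map_zero]
    obtain ⟨h₁, h₂⟩ := mul_quart c d v w
    simp only [hvw, hvw', mul_zero, add_zero] at h₁ h₂
    exact Or.inr (hcancel (k := 1) (by rwa [pow_one]) (by rwa [pow_one]))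
  · have hdet : det v w = 0 := h.det_eq_zero hcd hv hw hwv hvw (by
      rw [semiBilin_mul_add_semiBilin_mul, hres, mul_zero])
    obtain ⟨h₁, h₂⟩ := sq_mul_quart_of_det_eq_zero c d v w hdet
    rw [hres, mul_zero] at h₁ h₂
    exact Or.inr (hcancel h₁ h₂)

end IsAPNOn

end APNOn

section Planes

variable {F : Type*} [Field F]

/-- The coefficients of the form conjugate to `semiBilin c`, relative to the real structure
`(x, y) ↦ (σ y, σ x)`. -/
def conj (σ : F →+* F) (c : Fin 4 → F) : Fin 4 → F := fun i => σ (c i.rev)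

/-- The real structure `(x, y) ↦ (σ y, σ x)` on `F × F`. -/
def swapConj (σ : F →+* F) (v : F × F) : F × F := (σ v.2, σ v.1)

/-- The plane of vectors `(x, σ x)`, on which a form in `x` and `σ x` becomes a form in two
variables. -/
def conjPlane (σ : F →+* F) : Set (F × F) := {v | v.2 = σ v.1}

/-- The plane of vectors with both coordinates fixed by `σ`. -/
def fixedPlane (σ : F →+* F) : Set (F × F) := {v | σ v.1 = v.1 ∧ σ v.2 = v.2}

variable {σ : F →+* F} {c d : Fin 4 → F} {v w : F × F}

lemma mem_conjPlane : v ∈ conjPlane σ ↔ v.2 = σ v.1 := Iff.rfl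

lemma isAPNOn_conjPlane_iff_forall : IsAPNOn (conjPlane σ) c ↔ ∀ a : F, a ≠ 0 → ∀ x : F,
    semiBilin c (x, σ x) (a, σ a) + semiBilin c (a, σ a) (x, σ x) = 0 → x = 0 ∨ x = a := by
  have hpair (v : F × F) (hv : v ∈ conjPlane σ) : v = (v.1, σ v.1) := Prod.ext rfl hv
  have hinj (x a : F) : (x, σ x) = (a, σ a) ↔ x = a := by simp +contextual [Prod.ext_iff]
  constructor
  · intro h a ha x hx
    simpa [hinj] using h (a, σ a) rfl (by simpa using ha) (x, σ x) rfl hx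
  · intro h v hv hv0 w hw hvw
    rw [hpair v hv, hpair w hw] at hvw ⊢
    rw [hpair v hv] at hv0
    simpa [hinj] using h v.1 (by simpa using hv0) w.1 hvw

lemma mem_fixedPlane : v ∈ fixedPlane σ ↔ σ v.1 = v.1 ∧ σ v.2 = v.2 := Iff.rfl

lemma apply_semiBilin_eq_semiBilin_conj (v w : F × F) :
    σ (semiBilin c v w) = semiBilin (conj σ c) (swapConj σ v) (swapConj σ w) := by
  simp only [semiBilin, conj, swapConj, map_add, map_mul, map_pow, Fin.reduceRev]
  ring

lemma conj_transform_swapConj (hinv : Function.Involutive σ) (v : F × F) :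
    conj σ (transform c v (swapConj σ v)) = transform (conj σ c) v (swapConj σ v) := by
  funext i
  fin_cases i <;>
    simp [conj, transform, apply_semiBilin_eq_semiBilin_conj (c := c), swapConj, hinv _]

lemma isConjPair_conjPlane (hinv : Function.Involutive σ) (c : Fin 4 → F) :
    IsConjPair σ (conjPlane σ) c (conj σ c) where
  smul_mem t ht v hv := by
    simp only [mem_conjPlane] at hv
    simp [mem_conjPlane, hv, ht]
  apply_semiBilin v hv w hw := by
    simp only [mem_conjPlane] at hv hw
    have hswap (v : F × F) (hv : v.2 = σ v.1) : swapConj σ v = v := by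
      simp [swapConj, hv, hinv _, Prod.ext_iff]
    rw [apply_semiBilin_eq_semiBilin_conj, hswap v hv, hswap w hw]

lemma isConjPair_fixedPlane (c : Fin 4 → F) : IsConjPair σ (fixedPlane σ) c (σ ∘ c) where
  smul_mem t ht v hv := by
    obtain ⟨h₁, h₂⟩ := hv
    exact ⟨by simp [ht, h₁], by simp [ht, h₂]⟩
  apply_semiBilin v hv w hw := by
    simp [semiBilin, hv.1, hv.2, hw.1, hw.2]

lemma comp_transform (hinv : Function.Involutive σ) (hv : v ∈ conjPlane σ) (hw : w ∈ conjPlane σ) :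
    σ ∘ transform c v w = transform (conj σ c) v w := by
  have happly := (isConjPair_conjPlane hinv c).apply_semiBilin
  funext i
  fin_cases i <;> simp [transform, happly, hv, hw]

lemma plucker_comm (c d : Fin 4 → F) (i j : Fin 4) : plucker c d i j = plucker c d j i :=
  add_comm _ _

lemma apply_plucker_conj (hinv : Function.Involutive σ) (c : Fin 4 → F) (i j : Fin 4) :
    σ (plucker c (conj σ c) i j) = plucker c (conj σ c) i.rev j.rev := by
  simp only [plucker, conj, map_add, map_mul, hinv _, Fin.rev_rev]
  ring

lemma apply_plucker_comp (hinv : Function.Involutive σ) (c : Fin 4 → F) (i j : Fin 4) :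
    σ (plucker c (σ ∘ c) i j) = plucker c (σ ∘ c) i j := by
  simp only [plucker, Function.comp_apply, map_add, map_mul, hinv _]
  ring

lemma apply_theta_conj (hinv : Function.Involutive σ) (c : Fin 4 → F) :
    σ (theta c (conj σ c)) = theta c (conj σ c) := by
  simp only [theta, map_add, apply_plucker_conj hinv _, Fin.reduceRev]
  rw [plucker_comm _ _ 3, plucker_comm _ _ 2]

variable [CharP F 2]

lemma isAPNOn_transform_swapConj_iff (hinv : Function.Involutive σ)
    (hdet : det v (swapConj σ v) ≠ 0) :
    IsAPNOn (conjPlane σ) (transform c v (swapConj σ v)) ↔ IsAPNOn (conjPlane σ) c := by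
  constructor
  · refine fun h => h.of_transform fun z hz => ?_
    simp only [det, swapConj] at hdet
    have hσdet : σ (v.1 * σ v.1 + v.2 * σ v.2) = v.1 * σ v.1 + v.2 * σ v.2 := by
      simp only [map_add, map_mul, hinv _, mul_comm]
    set y := (z.1 * σ v.1 + σ z.1 * σ v.2) / (v.1 * σ v.1 + v.2 * σ v.2) with hy
    have hσy : σ y = (σ z.1 * v.1 + z.1 * v.2) / (v.1 * σ v.1 + v.2 * σ v.2) := by
      simp only [hy, map_div₀, hσdet, map_add, map_mul, hinv _]
    refine ⟨(y, σ y), rfl, Prod.ext ?_ ?_⟩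
    all_goals
      simp only [mem_conjPlane] at hz
      simp only [basisMap, swapConj, Prod.fst_add, Prod.snd_add, Prod.smul_fst, Prod.smul_snd,
        smul_eq_mul, hσy, hz]
      rw [hy]
      field_simp
      grind
  · refine fun h => h.transform hdet fun z hz => ?_
    simp only [mem_conjPlane] at hz ⊢
    simp [basisMap, swapConj, hz, hinv _, add_comm]

lemma IsAPNOn.transform_fixedPlane (h : IsAPNOn (conjPlane σ) c) (hv : v ∈ conjPlane σ)
    (hw : w ∈ conjPlane σ) (hdet : det v w ≠ 0) :
    IsAPNOn (fixedPlane σ) (KimAPN.transform c v w) := by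
  refine h.transform hdet fun z hz => ?_
  simp only [mem_conjPlane, mem_fixedPlane] at *
  simp [basisMap, hz, hv, hw]

end Planes

section Quadratic

variable {F : Type*} [Field F] [CharP F 2] {σ : F →+* F} {m : ℕ} {α β γ : F}

lemma exists_mem_fixedPlane_quadratic_eq_zero (hσ : IsConjugation σ m) (hα : σ α = α)
    (hβ : σ β = β) (hγ : σ γ = γ) (hβ0 : β ≠ 0) (htrace : traceSum m (α * γ / β ^ 2) = 0) :
    ∃ w ∈ fixedPlane σ, w ≠ 0 ∧ α * w.1 ^ 2 + β * w.1 * w.2 + γ * w.2 ^ 2 = 0 := by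
  by_cases hα0 : α = 0
  · exact ⟨(1, 0), by simp [mem_fixedPlane], by simp, by simp [hα0]⟩
  obtain ⟨y, hy, hσy⟩ := hσ.exists_sq_add_self_eq (r := α * γ / β ^ 2) (by simp [hα, hβ, hγ])
  rw [htrace, add_zero] at hσy
  refine ⟨(β * y, α), by simp [mem_fixedPlane, hα, hβ, hσy], by simp [hα0], ?_⟩
  have hy' : β ^ 2 * (y ^ 2 + y) = α * γ := by rw [hy, mul_div_cancel₀ _ (pow_ne_zero 2 hβ0)]
  dsimp only
  grind

lemma exists_ne_zero_mul_eq_mul_apply (hα : σ α = γ) (hβ : σ β = β) (hβ0 : β ≠ 0) (hα0 : α ≠ 0)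
    {y : F} (hy : y ^ 2 + y = α * γ / β ^ 2) (hσy : σ y = y + 1) :
    ∃ e, e ≠ 0 ∧ α * e = β * y * σ e ∧ α * e ^ 2 + β * e * σ e + γ * (σ e) ^ 2 = 0 := by
  have hγ0 : γ ≠ 0 := hα ▸ (map_ne_zero σ).2 hα0
  have hy' : β ^ 2 * (y ^ 2 + y) = α * γ := by rw [hy, mul_div_cancel₀ _ (pow_ne_zero 2 hβ0)]
  have hnorm : β * y / α * σ (β * y / α) = 1 := by
    simp only [map_div₀, map_mul, hα, hβ, hσy]
    field_simp
    linear_combination hy'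
  obtain ⟨e, he0, he⟩ := exists_ne_zero_eq_mul_apply hnorm
  have hαe : α * e = β * y * σ e := by
    conv_lhs => rw [he]
    field_simp
  refine ⟨e, he0, hαe, mul_left_cancel₀ hα0 ?_⟩
  grind

lemma exists_mem_conjPlane_quadratic_eq_zero (hσ : IsConjugation σ m) (hα : σ α = γ)
    (hβ : σ β = β) (hβ0 : β ≠ 0) (htrace : traceSum m (α * γ / β ^ 2) = 1) :
    ∃ v ∈ conjPlane σ, ∃ w ∈ conjPlane σ, det v w ≠ 0 ∧
      α * v.1 ^ 2 + β * v.1 * v.2 + γ * v.2 ^ 2 = 0 ∧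
      α * w.1 ^ 2 + β * w.1 * w.2 + γ * w.2 ^ 2 = 0 := by
  have hγ : σ γ = α := by rw [← hα, hσ.involutive]
  have hα0 : α ≠ 0 := by
    rintro rfl
    simp [traceSum_zero] at htrace
  obtain ⟨y, hy, hσy⟩ := hσ.exists_sq_add_self_eq (r := α * γ / β ^ 2)
    (by simp [hα, hβ, hγ, mul_comm])
  rw [htrace] at hσy
  obtain ⟨e, he0, he, hroot⟩ := exists_ne_zero_mul_eq_mul_apply hα hβ hβ0 hα0 hy hσy
  obtain ⟨e', he0', he', hroot'⟩ := exists_ne_zero_mul_eq_mul_apply (y := y + 1) hα hβ hβ0 hα0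
    (by rw [← hy]; grind) (by rw [map_add, map_one, hσy])
  refine ⟨(e, σ e), rfl, (e', σ e'), rfl, ?_, hroot, hroot'⟩
  have hdet : α * det (e, σ e) (e', σ e') = β * σ e * σ e' := by
    simp only [det]
    grind
  have hne : β * σ e * σ e' ≠ 0 :=
    mul_ne_zero (mul_ne_zero hβ0 ((map_ne_zero σ).2 he0)) ((map_ne_zero σ).2 he0')
  exact right_ne_zero_of_mul (hdet ▸ hne)

end Quadratic

section TraceDisc

variable {F : Type*} [Field F] [CharP F 2] {σ : F →+* F} {m : ℕ} {c : Fin 4 → F} {v : F × F}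

namespace IsAPNOn

lemma traceSum_disc_fixedPlane (h : IsAPNOn (fixedPlane σ) c) (hσ : IsConjugation σ m)
    (hv : v ∈ fixedPlane σ) (hquad : quad c (σ ∘ c) v ≠ 0) :
    quart c (σ ∘ c) v = 0 ∨ traceSum m (disc c (σ ∘ c) v) = 1 := by
  have hp := apply_plucker_comp hσ.involutive c
  have hlead : σ (lead c (σ ∘ c) v) = lead c (σ ∘ c) v := by simp [lead, hp, hv.1, hv.2]
  have hmid : σ (quad c (σ ∘ c) v) = quad c (σ ∘ c) v := by simp [quad, theta, hp, hv.1, hv.2]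
  have htrail : σ (trail c (σ ∘ c) v) = trail c (σ ∘ c) v := by simp [trail, hp, hv.1, hv.2]
  have hdisc : σ (disc c (σ ∘ c) v) = disc c (σ ∘ c) v := by simp [disc, hlead, hmid, htrail]
  refine or_iff_not_imp_right.2 fun htrace => ?_
  obtain ⟨w, hw, hw0, hroot⟩ := exists_mem_fixedPlane_quadratic_eq_zero hσ hlead hmid htrail hquad
    ((hσ.traceSum_eq_zero_or_one hdisc).resolve_right htrace)
  exact (h.quad_eq_zero_or_quart_eq_zero (isConjPair_fixedPlane c) hv hw hw0 hroot).resolve_left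
    hquad

lemma traceSum_disc_conjPlane (h : IsAPNOn (conjPlane σ) c) (hσ : IsConjugation σ m)
    (hv : v ∈ conjPlane σ) (hquad : quad c (conj σ c) v ≠ 0) :
    quart c (conj σ c) v = 0 ∨ traceSum m (disc c (conj σ c) v) = 0 := by
  have hp := apply_plucker_conj hσ.involutive c
  have hcomm := plucker_comm c (conj σ c)
  have hθ := apply_theta_conj hσ.involutive c
  rw [mem_conjPlane] at hv
  have hσv : σ v.2 = v.1 := by rw [hv, hσ.involutive]
  have hlead : σ (lead c (conj σ c) v) = trail c (conj σ c) v := by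
    simp only [lead, trail, map_add, map_mul, map_pow, hp, Fin.reduceRev, hσv, ← hv]
    rw [hcomm 3 2, hcomm 3 1, hcomm 2 1]
    ring
  have hmid : σ (quad c (conj σ c) v) = quad c (conj σ c) v := by
    simp only [quad, map_add, map_mul, map_pow, hp, Fin.reduceRev, hθ, hσv, ← hv]
    rw [hcomm 3 1, hcomm 2 0]
    ring
  have hdisc : σ (disc c (conj σ c) v) = disc c (conj σ c) v := by
    have htrail : σ (trail c (conj σ c) v) = lead c (conj σ c) v := by rw [← hlead, hσ.involutive]
    simp [disc, hlead, hmid, htrail, mul_comm]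
  refine or_iff_not_imp_right.2 fun htrace => ?_
  obtain ⟨w, hw, z, -, hdet, hroot, -⟩ := exists_mem_conjPlane_quadratic_eq_zero hσ hlead hmid
    hquad ((hσ.traceSum_eq_zero_or_one hdisc).resolve_left htrace)
  have hw0 : w ≠ 0 := by
    rintro rfl
    simp [det] at hdet
  exact (h.quad_eq_zero_or_quart_eq_zero (isConjPair_conjPlane hσ.involutive c) hv hw hw0
    hroot).resolve_left hquad

end IsAPNOn

end TraceDisc

section NormalForm

variable {F : Type*} [Field F] {σ : F →+* F} {m : ℕ} {c d : Fin 4 → F} {v : F × F}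

lemma quart_eq_mul_quadratic {s : F} (hv : v.1 ^ 2 = s * v.2 ^ 2) :
    quart c d v =
      v.2 ^ 4 * (plucker c d 2 3 + theta c d * s + plucker c d 0 1 * s ^ 2) := by
  rw [quart, show v.1 ^ 4 = (v.1 ^ 2) ^ 2 by ring, hv]
  ring

lemma eq_zero_or_one_of_apply_eq_sq (hσ : IsConjugation σ m) (hm : Even m) {y : F}
    (hy : σ y = y ^ 2) : y = 0 ∨ y = 1 := by
  have hy4 : y ^ 2 ^ 2 = y := by
    rw [pow_two 2, pow_mul, ← hy, ← map_pow, ← hy, hσ.involutive]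
  have hiter (k : ℕ) : y ^ (2 ^ 2) ^ k = y := by
    induction k with
    | zero => simp
    | succ k ih => rw [pow_succ, pow_mul, ih, hy4]
  have hfix : σ y = y := by
    obtain ⟨k, rfl⟩ := hm
    rw [hσ.apply_eq, ← two_mul, pow_mul, hiter]
  rw [hfix, sq] at hy
  exact (IsIdempotentElem.iff_eq_zero_or_one).1 hy.symm

variable [CharP F 2]

lemma disc_eq_of_plucker_eq_zero (h02 : plucker c d 0 2 = 0) (h13 : plucker c d 1 3 = 0)
    (hθ : theta c d ≠ 0) {s : F} (hs : s ≠ 0) (hv0 : v.2 ≠ 0) (hv : v.1 ^ 2 = s * v.2 ^ 2) :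
    disc c d v = plucker c d 0 1 * plucker c d 1 2 / theta c d ^ 2 * s +
      plucker c d 1 2 * plucker c d 2 3 / theta c d ^ 2 * s⁻¹ +
      plucker c d 1 2 / theta c d := by
  have hrel := plucker_relation c d 0 1 2 3
  have hquad : quad c d v ^ 2 = theta c d ^ 2 * s * v.2 ^ 4 := by
    rw [quad, h02, h13]
    linear_combination theta c d ^ 2 * v.2 ^ 2 * hv
  rw [disc, hquad, lead, trail, h02, h13, hv]
  field_simp
  simp only [theta]
  rw [h02] at hrel
  linear_combination s * v.2 ^ 2 * hrel

lemma plucker_mul_eq_zero_of_traceSum_disc (hm : 4 ≤ m) {N : ℕ}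
    (hN : N = 2 ^ m + 1 ∨ N = 2 ^ m - 1) {ζ : F} (hζ : IsPrimitiveRoot ζ N)
    (h02 : plucker c d 0 2 = 0) (h13 : plucker c d 1 3 = 0) (hθ : theta c d ≠ 0) {ε : F}
    (h : ∀ s : F, s ^ N = 1 → ∃ v : F × F, v.2 ≠ 0 ∧ v.1 ^ 2 = s * v.2 ^ 2 ∧
      (quart c d v = 0 ∨ traceSum m (disc c d v) = ε)) :
    plucker c d 0 1 * plucker c d 1 2 = 0 ∧ plucker c d 1 2 * plucker c d 2 3 = 0 ∧
      traceSum m (plucker c d 1 2 / theta c d) = ε := by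
  have hN0 : N ≠ 0 := by
    have : 2 ^ 4 ≤ 2 ^ m := Nat.pow_le_pow_right two_pos hm
    omega
  obtain ⟨h₁, h₂, h₃⟩ := eq_zero_of_quadratic_eq_zero_or_traceSum hm hN hζ hθ
    (h₀ := plucker c d 2 3) (h₂ := plucker c d 0 1)
    (κ := plucker c d 0 1 * plucker c d 1 2 / theta c d ^ 2)
    (κ' := plucker c d 1 2 * plucker c d 2 3 / theta c d ^ 2)
    (τ := ε + traceSum m (plucker c d 1 2 / theta c d)) fun s hs => by
      obtain ⟨v, hv0, hv, hquart | htrace⟩ := h s hs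
      · rw [quart_eq_mul_quadratic hv] at hquart
        exact Or.inl ((mul_eq_zero.1 hquart).resolve_left (pow_ne_zero 4 hv0))
      · have hs0 : s ≠ 0 := by
          rintro rfl
          simp [hN0] at hs
        rw [disc_eq_of_plucker_eq_zero h02 h13 hθ hs0 hv0 hv, traceSum_add, traceSum_add] at htrace
        exact Or.inr (CharTwo.add_eq_iff_eq_add.1 htrace)
  simp only [div_eq_zero_iff, pow_eq_zero_iff two_ne_zero, hθ, or_false] at h₁ h₂
  exact ⟨h₁, h₂, (CharTwo.add_eq_zero.1 h₃).symm⟩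

lemma IsAPNOn.plucker_one_two_eq_zero_or_even (h : IsAPNOn (conjPlane σ) c)
    (hσ : IsConjugation σ m) (hm : 4 ≤ m) (h02 : plucker c (conj σ c) 0 2 = 0)
    (h13 : plucker c (conj σ c) 1 3 = 0) (hθ : theta c (conj σ c) ≠ 0) :
    plucker c (conj σ c) 1 2 = 0 ∨ (Even m ∧ plucker c (conj σ c) 2 3 = 0) := by
  obtain ⟨ζ, hζ⟩ := hσ.exists_isPrimitiveRoot (Or.inl rfl)
  obtain ⟨-, h₂, htrace⟩ := plucker_mul_eq_zero_of_traceSum_disc hm (Or.inl rfl) hζ h02 h13 hθ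
    (ε := 0) fun s hs => by
      obtain ⟨w, rfl⟩ := hσ.exists_sq_eq s
      have hw : w * σ w = 1 := by
        rw [hσ.mul_apply_eq_one_iff, ← CharTwo.sq_inj, one_pow, ← hs, pow_right_comm]
      obtain ⟨z, hz0, hz⟩ := exists_ne_zero_eq_mul_apply hw
      have hσz0 := (map_ne_zero σ).2 hz0
      have hquad : quad c (conj σ c) (z, σ z) ≠ 0 := by
        rw [quad, h02, h13, zero_mul, zero_mul, zero_add, add_zero]
        exact mul_ne_zero (mul_ne_zero hθ hz0) hσz0
      exact ⟨(z, σ z), hσz0, by rw [← mul_pow, ← hz], h.traceSum_disc_conjPlane hσ rfl hquad⟩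
  refine or_iff_not_imp_left.2 fun h12 => ?_
  have h23 := (mul_eq_zero.1 h₂).resolve_left h12
  have h03 : plucker c (conj σ c) 0 3 = 0 := by
    have hrel := plucker_relation c (conj σ c) 0 1 2 3
    rw [h02, h23, mul_zero, zero_mul, zero_add, eq_comm, mul_eq_zero] at hrel
    exact hrel.resolve_right h12
  rw [theta, h03, zero_add, div_self h12] at htrace
  simp only [traceSum, one_pow, sum_const, card_range, nsmul_eq_mul, mul_one] at htrace
  exact ⟨even_iff_two_dvd.2 ((CharP.cast_eq_zero_iff F 2 m).1 htrace), h23⟩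

lemma eq_zero_of_mul_add_mul_apply_eq_zero (hinv : Function.Involutive σ) {a b x : F}
    (hab : a * σ a + b * σ b ≠ 0) (hx : a * x + b * σ x = 0) : x = 0 := by
  have hσx := congrArg σ hx
  simp only [map_add, map_mul, hinv _, map_zero] at hσx
  refine (mul_eq_zero.1 (?_ : (a * σ a + b * σ b) * x = 0)).resolve_left hab
  grind

lemma isAPNOn_conjPlane_of_middle_eq_zero (hinv : Function.Involutive σ) (h1 : c 1 = 0)
    (h2 : c 2 = 0) (h : c 0 * σ (c 0) + c 3 * σ (c 3) ≠ 0) : IsAPNOn (conjPlane σ) c := by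
  refine isAPNOn_conjPlane_iff_forall.2 fun a ha0 x hx => ?_
  have hzero : x ^ 2 * a + a ^ 2 * x = 0 := by
    refine eq_zero_of_mul_add_mul_apply_eq_zero hinv h (Eq.trans ?_ hx)
    simp only [semiBilin, h1, h2, map_add, map_mul, map_pow]
    ring
  have hfactor : a * (x * (x + a)) = 0 := by linear_combination hzero
  rcases mul_eq_zero.1 ((mul_eq_zero.1 hfactor).resolve_left ha0) with hx0 | hxa
  · exact Or.inl hx0
  · exact Or.inr (CharTwo.add_eq_zero.1 hxa)

lemma isAPNOn_conjPlane_of_outer_eq_zero (hσ : IsConjugation σ m) (hm : Even m) (h0 : c 0 = 0)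
    (h3 : c 3 = 0) (h : c 1 * σ (c 1) + c 2 * σ (c 2) ≠ 0) : IsAPNOn (conjPlane σ) c := by
  refine isAPNOn_conjPlane_iff_forall.2 fun a ha0 x hx => ?_
  have hzero : x ^ 2 * σ a + a ^ 2 * σ x = 0 := by
    refine eq_zero_of_mul_add_mul_apply_eq_zero hσ.involutive h (Eq.trans ?_ hx)
    simp only [semiBilin, h0, h3, map_add, map_mul, map_pow, hσ.involutive _]
    ring
  have hratio : σ (x / a) = (x / a) ^ 2 := by
    have := (map_ne_zero σ).2 ha0
    rw [map_div₀, div_pow, div_eq_div_iff this (pow_ne_zero 2 ha0), mul_comm]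
    exact (CharTwo.add_eq_zero.1 hzero).symm
  rcases eq_zero_or_one_of_apply_eq_sq hσ hm hratio with hx0 | hxa
  · exact Or.inl ((div_eq_zero_iff.1 hx0).resolve_right ha0)
  · exact Or.inr ((div_eq_one_iff_eq ha0).1 hxa)

lemma isAPNOn_conjPlane_iff_of_plucker_eq_zero (hσ : IsConjugation σ m) (hm : 4 ≤ m)
    (h02 : plucker c (conj σ c) 0 2 = 0) (hθ : theta c (conj σ c) ≠ 0) :
    IsAPNOn (conjPlane σ) c ↔
      plucker c (conj σ c) 1 2 = 0 ∨ (Even m ∧ plucker c (conj σ c) 2 3 = 0) := by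
  have hp := apply_plucker_conj hσ.involutive c
  have hcomm := plucker_comm c (conj σ c)
  have hcramer := mul_plucker_eq c (conj σ c)
  have h13 : plucker c (conj σ c) 1 3 = 0 := by
    simpa [h02, hcomm 3 1, eq_comm] using hp 0 2
  have h01 : plucker c (conj σ c) 2 3 = 0 → plucker c (conj σ c) 0 1 = 0 := fun h23 => by
    simpa [h23, hcomm 1 0, eq_comm] using hp 2 3
  refine ⟨fun h => h.plucker_one_two_eq_zero_or_even hσ hm h02 h13 hθ, fun h => ?_⟩
  by_cases h12 : plucker c (conj σ c) 1 2 = 0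
  · have h23 : plucker c (conj σ c) 2 3 = 0 := by
      have hrel := plucker_relation c (conj σ c) 0 1 2 3
      rw [h02, h12, zero_mul, mul_zero, zero_add, mul_eq_zero] at hrel
      exact hrel.elim (fun h01 => by simpa [h01, hcomm 3 2, eq_comm] using hp 0 1) id
    rw [theta, h12, add_zero] at hθ
    have hc1 : c 1 = 0 := by simpa [h13, h01 h23, hθ, hcomm] using hcramer 1 0 3
    have hc2 : c 2 = 0 := by simpa [h02, h23, hθ, hcomm] using hcramer 2 0 3
    exact isAPNOn_conjPlane_of_middle_eq_zero hσ.involutive hc1 hc2 hθ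
  · obtain ⟨heven, h23⟩ := h.resolve_left h12
    have hc0 : c 0 = 0 := by simpa [h02, h01 h23, h12] using hcramer 0 1 2
    have hc3 : c 3 = 0 := by simpa [h13, h23, h12, hcomm] using hcramer 3 1 2
    exact isAPNOn_conjPlane_of_outer_eq_zero hσ heven hc0 hc3 h12

end NormalForm

section FixedPlane

variable {F : Type*} [Field F] {σ : F →+* F} {m : ℕ} {c d : Fin 4 → F}

lemma IsAPNOn.apply_zero_ne_zero (h : IsAPNOn (fixedPlane σ) c) (hσ : IsConjugation σ m)
    (hm : 2 ≤ m) : c 0 ≠ 0 := by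
  obtain ⟨t, ht, ht0, ht1⟩ := hσ.exists_apply_eq_self_ne_ne hm 0 1
  simpa [semiBilin] using h.semiBilin_self_ne_zero (isConjPair_fixedPlane c) ht ht0 ht1
    (v := (1, 0)) (by simp [mem_fixedPlane]) (by simp)

variable [CharP F 2]

namespace IsAPNOn

lemma theta_eq_zero_fixedPlane (h : IsAPNOn (fixedPlane σ) c) (hσ : IsConjugation σ m)
    (hm : 4 ≤ m) (h02 : plucker c (σ ∘ c) 0 2 = 0) (h13 : plucker c (σ ∘ c) 1 3 = 0) :
    theta c (σ ∘ c) = 0 := by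
  by_contra hθ
  obtain ⟨ζ, hζ⟩ := hσ.exists_isPrimitiveRoot (Or.inr rfl)
  obtain ⟨h₁, -, htrace⟩ := plucker_mul_eq_zero_of_traceSum_disc hm (Or.inr rfl) hζ h02 h13 hθ
    (ε := 1) fun s hs => by
      obtain ⟨w, rfl⟩ := hσ.exists_sq_eq s
      have hw : w ^ (2 ^ m - 1) = 1 := by rw [← CharTwo.sq_inj, one_pow, ← hs, pow_right_comm]
      have hmem : (w, 1) ∈ fixedPlane σ := ⟨hσ.apply_eq_self_of_pow_eq_one hw, map_one σ⟩
      have hw0 : w ≠ 0 := by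
        rintro rfl
        have : 2 ^ 4 ≤ 2 ^ m := Nat.pow_le_pow_right two_pos hm
        simp [show 2 ^ m - 1 ≠ 0 by omega] at hw
      exact ⟨(w, 1), one_ne_zero, by simp, h.traceSum_disc_fixedPlane hσ hmem
        (by simp [quad, h02, h13, hθ, hw0])⟩
  have h12 : plucker c (σ ∘ c) 1 2 ≠ 0 := by
    intro h12
    simp [h12, traceSum_zero] at htrace
  refine h.apply_zero_ne_zero hσ (by omega) ?_
  simpa [h02, (mul_eq_zero.1 h₁).resolve_right h12, h12] using mul_plucker_eq c (σ ∘ c) 0 1 2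

end IsAPNOn

lemma disc_eq_of_theta_eq_zero (h02 : plucker c d 0 2 = 0) (hθ : theta c d = 0)
    (h13 : plucker c d 1 3 ≠ 0) (s : F) :
    disc c d (s, 1) =
      plucker c d 0 1 * plucker c d 1 2 / plucker c d 1 3 ^ 2 * s ^ 4 +
      plucker c d 0 1 / plucker c d 1 3 * s ^ 3 + plucker c d 1 2 / plucker c d 1 3 * s +
      plucker c d 1 2 * plucker c d 2 3 / plucker c d 1 3 ^ 2 := by
  have hrel := plucker_relation c d 0 1 2 3
  have h03 : plucker c d 0 3 = plucker c d 1 2 := CharTwo.add_eq_zero.1 hθ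
  simp only [disc, lead, trail, quad, h02, hθ]
  field_simp
  rw [h02, h03] at hrel
  grind

namespace IsAPNOn

lemma plucker_zero_one_ne_zero_fixedPlane (h : IsAPNOn (fixedPlane σ) c)
    (hσ : IsConjugation σ m) (hm : 2 ≤ m) (h02 : plucker c (σ ∘ c) 0 2 = 0)
    (hθ : theta c (σ ∘ c) = 0) (h13 : plucker c (σ ∘ c) 1 3 ≠ 0) :
    plucker c (σ ∘ c) 0 1 ≠ 0 := by
  intro h01
  have hrel := plucker_relation c (σ ∘ c) 0 1 2 3
  have h03 : plucker c (σ ∘ c) 0 3 = plucker c (σ ∘ c) 1 2 := CharTwo.add_eq_zero.1 hθ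
  have h12 : plucker c (σ ∘ c) 1 2 = 0 := by simpa [h01, h02, h03] using hrel
  refine h.apply_zero_ne_zero hσ hm ?_
  simpa [h01, h03, h12, h13] using mul_plucker_eq c (σ ∘ c) 0 1 3

lemma plucker_one_three_eq_zero_fixedPlane (h : IsAPNOn (fixedPlane σ) c)
    (hσ : IsConjugation σ m) (hm : 4 ≤ m) (h02 : plucker c (σ ∘ c) 0 2 = 0)
    (hθ : theta c (σ ∘ c) = 0) : plucker c (σ ∘ c) 1 3 = 0 := by
  by_contra h13
  have hp := apply_plucker_comp hσ.involutive c
  have h01 := h.plucker_zero_one_ne_zero_fixedPlane hσ (by omega) h02 hθ h13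
  obtain ⟨ζ, hζ⟩ := hσ.exists_isPrimitiveRoot (Or.inr rfl)
  obtain ⟨h₁, hh₁, hh₁'⟩ := hσ.exists_apply_eq_self_pow_four_eq (hp 0 1)
  obtain ⟨h₀, -, hh₀⟩ := hσ.exists_apply_eq_self_pow_four_eq (hp 2 3)
  obtain ⟨μ, hμ, hμ'⟩ := hσ.exists_apply_eq_self_pow_four_eq
    (x := plucker c (σ ∘ c) 0 1 * plucker c (σ ∘ c) 1 2 / plucker c (σ ∘ c) 1 3 ^ 2)
    (by simp [hp])
  refine div_ne_zero h01 h13 (cubic_coeff_eq_zero_of_linear_eq_zero_or_traceSum hm hζ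
    (h₀ := h₀) (h₁ := h₁) (l := μ + plucker c (σ ∘ c) 1 2 / plucker c (σ ∘ c) 1 3)
    (τ := 1 + traceSum m (plucker c (σ ∘ c) 1 2 * plucker c (σ ∘ c) 2 3 /
      plucker c (σ ∘ c) 1 3 ^ 2)) ?_ fun s hs => ?_)
  · rintro rfl
    exact h01 (by simp [← hh₁'])
  have hσs := hσ.apply_eq_self_of_pow_eq_one hs
  rcases h.traceSum_disc_fixedPlane hσ (v := (s, 1)) ⟨hσs, map_one σ⟩
    (by simpa [quad, h02, hθ] using h13) with hquart | htrace
  · left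
    refine eq_zero_of_pow_eq_zero (n := 4) ?_
    have hfrob : (h₀ + h₁ * s) ^ 4 = h₀ ^ 4 + h₁ ^ 4 * s ^ 4 := by grind
    rw [hfrob, hh₀, hh₁', ← hquart]
    simp [quart, hθ, add_comm]
  · right
    have hμs : traceSum m (plucker c (σ ∘ c) 0 1 * plucker c (σ ∘ c) 1 2 /
        plucker c (σ ∘ c) 1 3 ^ 2 * s ^ 4) = traceSum m (μ * s) := by
      rw [← hμ', ← mul_pow, pow_mul (μ * s) 2 2, hσ.traceSum_sq_of_apply_eq_self,
        hσ.traceSum_sq_of_apply_eq_self] <;> simp [hμ, hσs]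
    rw [disc_eq_of_theta_eq_zero h02 hθ h13, traceSum_add, traceSum_add, traceSum_add,
      hμs] at htrace
    rw [add_mul, traceSum_add]
    linear_combination CharTwo.add_eq_iff_eq_add.1 htrace

end IsAPNOn

lemma not_isAPNOn_fixedPlane_of_parallel (hσ : IsConjugation σ m) (hm : 2 ≤ m)
    (h02 : plucker c (σ ∘ c) 0 2 = 0) (h01 : plucker c (σ ∘ c) 0 1 = 0) :
    ¬ IsAPNOn (fixedPlane σ) c := by
  intro h
  have hc0 := h.apply_zero_ne_zero hσ hm
  have h12 : plucker c (σ ∘ c) 1 2 = 0 := by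
    simpa [h01, h02, hc0] using mul_plucker_eq c (σ ∘ c) 0 1 2
  obtain ⟨l, hl⟩ := hσ.exists_sq_eq (c 2 / c 0)
  have hc2 : c 2 = c 0 * l ^ 2 := by rw [hl, mul_div_cancel₀ _ hc0]
  obtain ⟨t, ht, htl, ht1⟩ := hσ.exists_apply_eq_self_ne_ne hm l (c 1 / c 0)
  have hwv : semiBilin c (t, 1) (1, 0) ≠ 0 := by
    intro h0
    have h0' : c 0 * (t + l) ^ 2 = 0 := by
      rw [CharTwo.add_sq, mul_add, ← hc2]
      simpa [semiBilin] using h0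
    exact htl (CharTwo.add_eq_zero.1 (by simpa [hc0] using h0'))
  have hvw : semiBilin c (1, 0) (t, 1) ≠ 0 := by
    intro h0
    have h0' : c 0 * t + c 1 = 0 := by simpa [semiBilin] using h0
    exact ht1 (by rw [eq_div_iff hc0, mul_comm, CharTwo.add_eq_zero.1 h0'])
  have hdet := h.det_eq_zero (isConjPair_fixedPlane c) (v := (1, 0)) (w := (t, 1))
    (by simp [mem_fixedPlane]) (by simp [mem_fixedPlane, ht]) hwv hvw (by
      simp [semiBilin_mul_add_semiBilin_mul, resolvent, lead, quad, trail, h01, h02, h12])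
  simp [det] at hdet

lemma not_isAPNOn_fixedPlane (hσ : IsConjugation σ m) (hm : 4 ≤ m)
    (h02 : plucker c (σ ∘ c) 0 2 = 0) (h : theta c (σ ∘ c) = 0 ∨ plucker c (σ ∘ c) 1 3 = 0) :
    ¬ IsAPNOn (fixedPlane σ) c := by
  intro hAPN
  obtain ⟨hθ, h13⟩ : theta c (σ ∘ c) = 0 ∧ plucker c (σ ∘ c) 1 3 = 0 := by
    rcases h with hθ | h13
    · exact ⟨hθ, hAPN.plucker_one_three_eq_zero_fixedPlane hσ hm h02 hθ⟩
    · exact ⟨hAPN.theta_eq_zero_fixedPlane hσ hm h02 h13, h13⟩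
  have hc0 := hAPN.apply_zero_ne_zero hσ (by omega)
  have hσc0 := (map_ne_zero σ).2 hc0
  obtain ⟨l, hl⟩ := hσ.exists_sq_eq (c 2 / c 0)
  have hc2 : c 2 = c 0 * l ^ 2 := by rw [hl, mul_div_cancel₀ _ hc0]
  have hσl : σ l = l := by
    rw [← CharTwo.sq_inj, ← map_pow, hl, map_div₀, div_eq_div_iff hσc0 hc0]
    have := CharTwo.add_eq_zero.1 h02
    simp only [Function.comp_apply] at this
    linear_combination this
  have hk : c 3 + c 1 * l ^ 2 ≠ 0 := by
    obtain ⟨t, ht, ht0, ht1⟩ := hσ.exists_apply_eq_self_ne_ne (by omega) 0 1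
    intro hk
    refine hAPN.semiBilin_self_ne_zero (isConjPair_fixedPlane c) ht ht0 ht1 (v := (l, 1))
      (by simp [mem_fixedPlane, hσl]) (by simp) ?_
    simp only [semiBilin, hc2]
    grind
  refine not_isAPNOn_fixedPlane_of_parallel hσ (by omega) h02 ?_ hAPN
  refine (mul_eq_zero.1 (?_ : (c 3 + c 1 * l ^ 2) * plucker c (σ ∘ c) 0 1 = 0)).resolve_left hk
  simp only [theta, plucker, Function.comp_apply, hc2, map_mul, map_pow, hσl] at *
  grind

end FixedPlane

section Reduction

variable {F : Type*} [Field F] [CharP F 2] {σ : F →+* F} {m : ℕ} {c d : Fin 4 → F} {e b : F}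

lemma exists_mul_one_add_mul_eq_mul_apply (hσ : IsConjugation σ m) {α β : F} (hβ : σ β = β)
    (hβ0 : β ≠ 0) (htrace : traceSum m (α * σ α / β ^ 2) = 0) :
    ∃ e, 1 + e * σ e ≠ 0 ∧ α * (1 + e * σ e) = β * σ e := by
  by_cases hα0 : α = 0
  · exact ⟨0, by simp, by simp [hα0]⟩
  have hσα0 : σ α ≠ 0 := (map_ne_zero σ).2 hα0
  obtain ⟨y, hy, hσy⟩ := hσ.exists_sq_add_self_eq (r := α * σ α / β ^ 2)
    (by simp [hβ, hσ.involutive _, mul_comm])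
  rw [htrace, add_zero] at hσy
  have hy' : β ^ 2 * (y ^ 2 + y) = α * σ α := by rw [hy, mul_div_cancel₀ _ (pow_ne_zero 2 hβ0)]
  have hy0 : y ≠ 0 := by
    rintro rfl
    simp [hα0] at hy'
  have he : α * (1 + β * y / α * σ (β * y / α)) = β * σ (β * y / α) := by
    simp only [map_div₀, map_mul, hβ, hσy]
    field_simp
    linear_combination -hy' + β ^ 2 * y ^ 2 * CharTwo.two_eq_zero (R := F)
  refine ⟨β * y / α, fun h => ?_, he⟩
  rw [h] at he
  simp [hσy, hβ0, hy0, hα0] at he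

lemma quad_eq_zero_of_mul_one_add_mul_eq (hdet : 1 + e * b ≠ 0)
    (h02 : plucker c d 0 2 * (1 + e * b) = theta c d * b)
    (h13 : plucker c d 1 3 * (1 + e * b) = theta c d * e) : quad c d (1, b) = 0 := by
  refine (mul_eq_zero.1 ?_).resolve_left hdet
  simp only [quad]
  grind

lemma sq_theta_mul_resolvent (hdet : 1 + e * b ≠ 0)
    (h02 : plucker c d 0 2 * (1 + e * b) = theta c d * b)
    (h13 : plucker c d 1 3 * (1 + e * b) = theta c d * e) :
    theta c d ^ 2 * resolvent c d (1, b) (e, 1) = (1 + e * b) ^ 2 *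
      (theta c d ^ 2 * plucker c d 1 2 + theta c d * plucker c d 0 2 * plucker c d 1 3 +
        plucker c d 0 2 ^ 2 * plucker c d 2 3 + plucker c d 1 3 ^ 2 * plucker c d 0 1) := by
  simp only [resolvent, quad_eq_zero_of_mul_one_add_mul_eq hdet h02 h13, lead, trail]
  generalize plucker c d 0 2 = t₂, plucker c d 1 3 = s₂, theta c d = t₁ at *
  grind

variable {θ₁ θ₂ θ₃ : F}

lemma quartic_eq_zero_iff (hinv : Function.Involutive σ) (hθ₁ : σ θ₁ = θ₁)
    (hdet : 1 + e * σ e ≠ 0) :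
    σ θ₃ * e ^ 4 + θ₁ * e ^ 2 + θ₃ = 0 ↔ θ₃ * (1 + e * σ e) ^ 2 + θ₁ * e ^ 2 = 0 := by
  constructor <;> intro h <;> have hσh := congrArg σ h <;>
    simp only [map_add, map_mul, map_pow, map_one, map_zero, hθ₁, hinv _] at hσh <;>
    refine (mul_eq_zero.1 ?_).resolve_left (pow_ne_zero 2 hdet)
  · calc (1 + e * σ e) ^ 2 * (θ₃ * (1 + e * σ e) ^ 2 + θ₁ * e ^ 2)
        = e ^ 4 * (θ₃ * σ e ^ 4 + θ₁ * σ e ^ 2 + σ θ₃) +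
          (σ θ₃ * e ^ 4 + θ₁ * e ^ 2 + θ₃) := by clear * -; grind
      _ = 0 := by rw [h, hσh, mul_zero, add_zero]
  · calc (1 + e * σ e) ^ 2 * (σ θ₃ * e ^ 4 + θ₁ * e ^ 2 + θ₃)
        = e ^ 4 * (σ θ₃ * (1 + σ e * e) ^ 2 + θ₁ * σ e ^ 2) +
          (θ₃ * (1 + e * σ e) ^ 2 + θ₁ * e ^ 2) := by clear * -; grind
      _ = 0 := by rw [h, hσh, mul_zero, add_zero]

lemma add_trace_eq_zero_iff (hinv : Function.Involutive σ) (hθ₁ : σ θ₁ = θ₁)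
    (hdet : 1 + e * σ e ≠ 0) :
    θ₃ * (1 + e * σ e) ^ 2 + θ₁ * e ^ 2 + (σ e ^ 2 * θ₃ + e ^ 2 * σ θ₃) = 0 ↔
      θ₃ * (1 + e * σ e) ^ 2 + θ₁ * e ^ 2 = 0 := by
  suffices hρ : θ₃ * (1 + e * σ e) ^ 2 + θ₁ * e ^ 2 + (σ e ^ 2 * θ₃ + e ^ 2 * σ θ₃) = 0 ∨
      θ₃ * (1 + e * σ e) ^ 2 + θ₁ * e ^ 2 = 0 → σ e ^ 2 * θ₃ + e ^ 2 * σ θ₃ = 0 by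
    constructor <;> intro h
    · rwa [hρ (Or.inl h), add_zero] at h
    · rw [hρ (Or.inr h), h, add_zero]
  rintro (h | h) <;> have hσh := congrArg σ h <;>
    simp only [map_add, map_mul, map_pow, map_one, map_zero, hθ₁, hinv _] at hσh
  · have he : 1 + e ≠ 0 := by
      intro h0
      rw [CharTwo.add_eq_zero] at h0
      simp [← h0, CharTwo.add_self_eq_zero] at hdet
    have hσe : 1 + σ e ≠ 0 := by simpa using (map_ne_zero σ).2 he
    refine (mul_eq_zero.1 ?_).resolve_left
      (mul_ne_zero (pow_ne_zero 2 he) (pow_ne_zero 2 hσe))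
    calc (1 + e) ^ 2 * (1 + σ e) ^ 2 * (σ e ^ 2 * θ₃ + e ^ 2 * σ θ₃)
        = σ e ^ 2 * (θ₃ * (1 + e * σ e) ^ 2 + θ₁ * e ^ 2 + (σ e ^ 2 * θ₃ + e ^ 2 * σ θ₃)) +
          e ^ 2 * (σ θ₃ * (1 + σ e * e) ^ 2 + θ₁ * σ e ^ 2 + (e ^ 2 * σ θ₃ + σ e ^ 2 * θ₃)) := by
          clear * -; grind
      _ = 0 := by rw [h, hσh, mul_zero, mul_zero, add_zero]
  · refine (mul_eq_zero.1 ?_).resolve_left (pow_ne_zero 2 hdet)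
    grind

lemma sq_add_quadratic_eq_zero_iff (hinv : Function.Involutive σ) (hθ₁ : σ θ₁ = θ₁)
    (hθ₁0 : θ₁ ≠ 0) (hdet : 1 + e * σ e ≠ 0) (hθ₂ : θ₂ * (1 + e * σ e) = θ₁ * σ e) :
    θ₁ ^ 2 * θ₃ + θ₁ * σ θ₂ ^ 2 + θ₂ ^ 2 * θ₃ + σ θ₂ ^ 2 * σ θ₃ = 0 ↔
      σ θ₃ * e ^ 4 + θ₁ * e ^ 2 + θ₃ = 0 := by
  have hσθ₂ : σ θ₂ * (1 + e * σ e) = θ₁ * e := by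
    simpa [hθ₁, hinv _, mul_comm (σ e)] using congrArg σ hθ₂
  have hmul : (1 + e * σ e) ^ 2 *
      (θ₁ ^ 2 * θ₃ + θ₁ * σ θ₂ ^ 2 + θ₂ ^ 2 * θ₃ + σ θ₂ ^ 2 * σ θ₃) =
      θ₁ ^ 2 * (θ₃ * (1 + e * σ e) ^ 2 + θ₁ * e ^ 2 + (σ e ^ 2 * θ₃ + e ^ 2 * σ θ₃)) := by
    grind
  rw [quartic_eq_zero_iff hinv hθ₁ hdet, ← add_trace_eq_zero_iff hinv hθ₁ hdet,
    ← mul_eq_zero_iff_left (pow_ne_zero 2 hdet), hmul, mul_eq_zero_iff_left (pow_ne_zero 2 hθ₁0)]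

end Reduction

section Classification

variable {F : Type*} [Field F] [CharP F 2] {σ : F →+* F} {m : ℕ} {c : Fin 4 → F}

lemma isAPNOn_conjPlane_iff_of_traceSum_eq_zero (hσ : IsConjugation σ m) (hm : 4 ≤ m)
    {θ₁ θ₂ θ₃ θ₄ : F} (h₁ : theta c (conj σ c) = θ₁) (h₂ : plucker c (conj σ c) 0 2 = θ₂)
    (h₃ : plucker c (conj σ c) 2 3 = θ₃) (h₄ : plucker c (conj σ c) 1 2 = θ₄)
    (hθ₁ : θ₁ ≠ 0) (htrace : traceSum m (θ₂ * σ θ₂ / θ₁ ^ 2) = 0) :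
    IsAPNOn (conjPlane σ) c ↔
      θ₁ ^ 2 * θ₄ + θ₁ * θ₂ * σ θ₂ + θ₂ ^ 2 * θ₃ + σ θ₂ ^ 2 * σ θ₃ = 0 ∨
      Even m ∧ θ₁ ^ 2 * θ₃ + θ₁ * σ θ₂ ^ 2 + θ₂ ^ 2 * θ₃ + σ θ₂ ^ 2 * σ θ₃ = 0 := by
  have hinv := hσ.involutive
  have hσθ₁ : σ θ₁ = θ₁ := h₁ ▸ apply_theta_conj hinv c
  have h₁₃ : plucker c (conj σ c) 1 3 = σ θ₂ := by
    rw [← h₂, apply_plucker_conj hinv]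
    exact plucker_comm ..
  have h₀₁ : plucker c (conj σ c) 0 1 = σ θ₃ := by
    rw [← h₃, apply_plucker_conj hinv]
    exact plucker_comm ..
  obtain ⟨e, hdet, he⟩ := exists_mul_one_add_mul_eq_mul_apply hσ hσθ₁ hθ₁ htrace
  have hσe : σ θ₂ * (1 + e * σ e) = θ₁ * e := by
    simpa [hσθ₁, hinv _, mul_comm (σ e)] using congrArg σ he
  have hw : swapConj σ (1, σ e) = (e, 1) := by simp [swapConj, hinv _]
  have hdet' : det (1, σ e) (e, 1) = 1 + e * σ e := by simp [det, mul_comm]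
  have hquad : quad c (conj σ c) (1, σ e) = 0 :=
    quad_eq_zero_of_mul_one_add_mul_eq hdet (by rw [h₂, h₁, he]) (by rw [h₁₃, h₁, hσe])
  have hresolvent := sq_theta_mul_resolvent (c := c) (d := conj σ c) hdet (by rw [h₂, h₁, he])
    (by rw [h₁₃, h₁, hσe])
  have hconj := conj_transform_swapConj (c := c) hinv (1, σ e)
  rw [← isAPNOn_transform_swapConj_iff hinv (v := (1, σ e)) (by rwa [hw, hdet']),
    isAPNOn_conjPlane_iff_of_plucker_eq_zero hσ hm]
  all_goals rw [hconj, hw]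
  · rw [plucker_transform_one_two, plucker_transform_two_three, hdet',
      mul_eq_zero_iff_left hdet, mul_eq_zero_iff_left hdet,
      ← mul_eq_zero_iff_left (b := resolvent _ _ _ _) (pow_ne_zero 2 (h₁ ▸ hθ₁)), hresolvent,
      mul_eq_zero_iff_left (pow_ne_zero 2 hdet),
      sq_add_quadratic_eq_zero_iff hinv hσθ₁ hθ₁ hdet he, h₁, h₂, h₃, h₄, h₁₃, h₀₁]
    simp [quart, h₁, h₃, h₀₁]
  · rw [plucker_transform_zero_two, hquad, mul_zero]
  · rw [theta_transform, hdet', h₁]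
    exact mul_ne_zero (pow_ne_zero 3 hdet) hθ₁

lemma theta_ne_zero_and_quad_ne_zero_of_isAPNOn (h : IsAPNOn (conjPlane σ) c)
    (hσ : IsConjugation σ m) (hm : 4 ≤ m) {v w : F × F} (hv : v ∈ conjPlane σ)
    (hw : w ∈ conjPlane σ) (hdet : det v w ≠ 0) (hquad : quad c (conj σ c) v = 0) :
    theta c (conj σ c) ≠ 0 ∧ quad c (conj σ c) w ≠ 0 := by
  have hcomp := comp_transform (c := c) hσ.involutive hv hw
  have hnot := mt (not_isAPNOn_fixedPlane hσ hm (c := transform c v w)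
    (by rw [hcomp, plucker_transform_zero_two, hquad, mul_zero]))
    (not_not.2 (h.transform_fixedPlane hv hw hdet))
  rw [hcomp, theta_transform, plucker_transform_one_three, not_or] at hnot
  exact ⟨right_ne_zero_of_mul hnot.1, right_ne_zero_of_mul hnot.2⟩

lemma IsAPNOn.theta_ne_zero (h : IsAPNOn (conjPlane σ) c) (hσ : IsConjugation σ m)
    (hm : 4 ≤ m) : theta c (conj σ c) ≠ 0 := by
  intro hθ
  set θ₂ := plucker c (conj σ c) 0 2 with hθ₂
  have h₁₃ : plucker c (conj σ c) 1 3 = σ θ₂ := by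
    rw [hθ₂, apply_plucker_conj hσ.involutive]
    exact plucker_comm ..
  obtain ⟨e, he0, hroot⟩ : ∃ e, e ≠ 0 ∧ θ₂ * e ^ 2 + σ θ₂ * σ e ^ 2 = 0 := by
    by_cases h0 : θ₂ = 0
    · exact ⟨1, one_ne_zero, by simp [h0]⟩
    obtain ⟨u, hu⟩ := hσ.exists_sq_eq (σ θ₂ / θ₂)
    obtain ⟨e, he0, he⟩ := exists_ne_zero_eq_mul_apply (σ := σ) (w := u) (by
      rw [← CharTwo.sq_inj, mul_pow, ← map_pow, hu, map_div₀, hσ.involutive]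
      field_simp [(map_ne_zero σ).2 h0])
    refine ⟨e, he0, ?_⟩
    rw [CharTwo.add_eq_zero]
    conv_lhs => rw [he, mul_pow, hu]
    field_simp
  obtain ⟨ω, hω⟩ := hσ.exists_apply_ne_self
  refine (theta_ne_zero_and_quad_ne_zero_of_isAPNOn h hσ hm (v := (e, σ e))
    (w := (e * ω, σ (e * ω))) rfl rfl ?_ ?_).1 hθ
  · have hdet : det (e, σ e) (e * ω, σ (e * ω)) = e * σ e * (σ ω + ω) := by
      simp only [det, map_mul]
      ring
    rw [hdet]
    exact mul_ne_zero (mul_ne_zero he0 ((map_ne_zero σ).2 he0)) (CharTwo.add_eq_zero.not.2 hω)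
  · simpa [quad, hθ, h₁₃, ← hθ₂] using hroot

lemma IsAPNOn.traceSum_eq_zero (h : IsAPNOn (conjPlane σ) c) (hσ : IsConjugation σ m)
    (hm : 4 ≤ m) : traceSum m (plucker c (conj σ c) 0 2 * σ (plucker c (conj σ c) 0 2) /
      theta c (conj σ c) ^ 2) = 0 := by
  have hσθ := apply_theta_conj hσ.involutive c
  refine (hσ.traceSum_eq_zero_or_one ?_).resolve_right fun htrace => ?_
  · simp [hσθ, hσ.involutive _, mul_comm]
  obtain ⟨v, hv, w, hw, hdet, hrootv, hrootw⟩ :=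
    exists_mem_conjPlane_quadratic_eq_zero hσ rfl hσθ (h.theta_ne_zero hσ hm) htrace
  rw [apply_plucker_conj hσ.involutive, plucker_comm c _ (Fin.rev 0)] at hrootv hrootw
  exact (theta_ne_zero_and_quad_ne_zero_of_isAPNOn h hσ hm hv hw hdet hrootv).2 hrootw

theorem isAPNOn_conjPlane_iff (hσ : IsConjugation σ m) (hm : 4 ≤ m)
    {θ₁ θ₂ θ₃ θ₄ : F} (h₁ : theta c (conj σ c) = θ₁) (h₂ : plucker c (conj σ c) 0 2 = θ₂)
    (h₃ : plucker c (conj σ c) 2 3 = θ₃) (h₄ : plucker c (conj σ c) 1 2 = θ₄) :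
    IsAPNOn (conjPlane σ) c ↔ θ₁ ≠ 0 ∧ traceSum m (θ₂ * σ θ₂ / θ₁ ^ 2) = 0 ∧
      (θ₁ ^ 2 * θ₄ + θ₁ * θ₂ * σ θ₂ + θ₂ ^ 2 * θ₃ + σ θ₂ ^ 2 * σ θ₃ = 0 ∨
      Even m ∧ θ₁ ^ 2 * θ₃ + θ₁ * σ θ₂ ^ 2 + θ₂ ^ 2 * θ₃ + σ θ₂ ^ 2 * σ θ₃ = 0) := by
  constructor
  · intro h
    have hθ₁ : θ₁ ≠ 0 := h₁ ▸ h.theta_ne_zero hσ hm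
    have htrace : traceSum m (θ₂ * σ θ₂ / θ₁ ^ 2) = 0 := h₁ ▸ h₂ ▸ h.traceSum_eq_zero hσ hm
    exact ⟨hθ₁, htrace,
      (isAPNOn_conjPlane_iff_of_traceSum_eq_zero hσ hm h₁ h₂ h₃ h₄ hθ₁ htrace).1 h⟩
  · rintro ⟨hθ₁, htrace, h⟩
    exact (isAPNOn_conjPlane_iff_of_traceSum_eq_zero hσ hm h₁ h₂ h₃ h₄ hθ₁ htrace).2 h

end Classification

section Derivative

variable {F : Type*} [Field F] [CharP F 2] {f : F → F}

lemma isAPN_iff_of_apply_add [Finite F] {D : F → F → F}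
    (hf : ∀ x a, f (x + a) + f x = f a + D x a) (hadd : ∀ x y a, D (x + y) a = D x a + D y a)
    (hself : ∀ a, D a a = 0) :
    IsAPN f ↔ ∀ a : F, a ≠ 0 → ∀ x : F, D x a = 0 → x = 0 ∨ x = a := by
  constructor
  · intro h a ha x hx
    by_contra! hne
    have hsub : ({0, a, x} : Set F) ⊆ {x | f (x + a) + f x = f a} := by
      have hzero : D 0 a = 0 := by simpa using hadd 0 0 a
      simp [Set.insert_subset_iff, hf, hx, hzero, hself]
    have hcard : ({0, a, x} : Set F).ncard = 3 :=
      Set.ncard_eq_three.2 ⟨0, a, x, ha.symm, hne.1.symm, hne.2.symm, rfl⟩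
    have := Set.ncard_le_ncard hsub
    have := h a ha (f a)
    omega
  · intro h a ha b
    rcases Set.eq_empty_or_nonempty {x | f (x + a) + f x = b} with hempty | ⟨y, (hy : _ = b)⟩
    · simp [hempty]
    have hsub : {x | f (x + a) + f x = b} ⊆ {y, y + a} := by
      rintro x (hx : _ = b)
      have hxy : D x a = D y a := by
        rw [hf] at hx hy
        exact add_left_cancel (hx.trans hy.symm)
      have := h a ha (x + y) (by rw [hadd, hxy, CharTwo.add_self_eq_zero])
      simpa [CharTwo.add_eq_zero, CharTwo.add_eq_iff_eq_add, add_comm a] using this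
    exact (Set.ncard_le_ncard hsub).trans (Set.ncard_insert_le _ _ |>.trans (by simp))

lemma isAPN_iff_isAPNOn_conjPlane [Finite F] {σ : F →+* F} {c : Fin 4 → F}
    (hf : ∀ x, f x = semiBilin c (x, σ x) (x, σ x)) :
    IsAPN f ↔ IsAPNOn (conjPlane σ) c := by
  have hpair (x y : F) : (x + y, σ (x + y)) = (x, σ x) + (y, σ y) := by simp
  rw [isAPNOn_conjPlane_iff_forall]
  refine isAPN_iff_of_apply_add
    (D := fun x a => semiBilin c (x, σ x) (a, σ a) + semiBilin c (a, σ a) (x, σ x))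
    (fun x a => ?_) (fun x y a => ?_) fun a => CharTwo.add_self_eq_zero _
  · simp only [hf, hpair, semiBilin_add_left, semiBilin_add_right]
    linear_combination CharTwo.add_self_eq_zero (semiBilin c (x, σ x) (x, σ x))
  · simp only [hpair, semiBilin_add_left, semiBilin_add_right]
    ring

end Derivative

end KimAPN

theorem kim_type_APN_characterization_general
    (m : ℕ) (hm : 4 ≤ m) (F : Type*) [Field F] [Fintype F]
    (hcard : Fintype.card F = 2 ^ (2 * m)) (a₀ a₁ a₂ a₃ : F) (f : F → F)
    (hf : ∀ x : F, f x = a₀ * x ^ (3 * 2 ^ m) + a₁ * x ^ (2 * 2 ^ m + 1)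
        + a₂ * x ^ (2 ^ m + 2) + a₃ * x ^ 3)
    (θ₁ θ₂ θ₃ θ₄ : F)
    (hθ₁ : θ₁ = a₀ * a₀ ^ (2 ^ m) + a₁ * a₁ ^ (2 ^ m) + a₂ * a₂ ^ (2 ^ m) + a₃ * a₃ ^ (2 ^ m))
    (hθ₂ : θ₂ = a₁ * a₀ ^ (2 ^ m) + a₂ ^ (2 ^ m) * a₃)
    (hθ₃ : θ₃ = a₀ * a₂ ^ (2 ^ m) + a₁ * a₃ ^ (2 ^ m))
    (hθ₄ : θ₄ = a₁ * a₁ ^ (2 ^ m) + a₂ * a₂ ^ (2 ^ m)) :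
    IsAPN f ↔
      ((Even m ∧
          ((θ₁ ≠ 0 ∧ (∑ i ∈ Finset.range m, (θ₂ * θ₂ ^ (2 ^ m) / θ₁ ^ 2) ^ 2 ^ i) = 0 ∧
              θ₁ ^ 2 * θ₄ + θ₁ * θ₂ * θ₂ ^ (2 ^ m) + θ₂ ^ 2 * θ₃
                + (θ₂ ^ (2 ^ m)) ^ 2 * θ₃ ^ (2 ^ m) = 0) ∨
           (θ₁ ≠ 0 ∧ (∑ i ∈ Finset.range m, (θ₂ * θ₂ ^ (2 ^ m) / θ₁ ^ 2) ^ 2 ^ i) = 0 ∧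
              θ₁ ^ 2 * θ₃ + θ₁ * (θ₂ ^ (2 ^ m)) ^ 2 + θ₂ ^ 2 * θ₃
                + (θ₂ ^ (2 ^ m)) ^ 2 * θ₃ ^ (2 ^ m) = 0))) ∨
       (Odd m ∧
          (θ₁ ≠ 0 ∧ (∑ i ∈ Finset.range m, (θ₂ * θ₂ ^ (2 ^ m) / θ₁ ^ 2) ^ 2 ^ i) = 0 ∧
              θ₁ ^ 2 * θ₄ + θ₁ * θ₂ * θ₂ ^ (2 ^ m) + θ₂ ^ 2 * θ₃
                + (θ₂ ^ (2 ^ m)) ^ 2 * θ₃ ^ (2 ^ m) = 0))) := by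
  have := charP_of_card_eq_prime_pow hcard
  have hσ := KimAPN.isConjugation_iterateFrobenius hcard
  have hsemiBilin (x : F) : f x = KimAPN.semiBilin ![a₃, a₂, a₁, a₀]
      (x, iterateFrobenius F 2 m x) (x, iterateFrobenius F 2 m x) := by
    simp only [hf, KimAPN.semiBilin, hσ.apply_eq, Matrix.cons_val]
    ring
  have key := KimAPN.isAPNOn_conjPlane_iff hσ hm (c := ![a₃, a₂, a₁, a₀]) (θ₁ := θ₁) (θ₂ := θ₂)
    (θ₃ := θ₃) (θ₄ := θ₄)
  simp only [KimAPN.theta, KimAPN.plucker, KimAPN.conj, Fin.reduceRev, Matrix.cons_val,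
    hσ.apply_eq] at key
  rw [KimAPN.isAPN_iff_isAPNOn_conjPlane hsemiBilin,
    key (by rw [hθ₁]; ring) (by rw [hθ₂]; ring) (by rw [hθ₃]; ring) (by rw [hθ₄]; ring)]
  rcases m.even_or_odd with h | h
  · simp [h, KimAPN.traceSum, and_or_left]
  · simp [h, Nat.not_even_iff_odd.2 h, KimAPN.traceSum]

/-- Characterization of Kim-type APN functions (Li–Li–Helleseth–Qu).
Here `q = 2^m`, conjugation `z̄ = z^q`, `Tr_m` is realized as `x ↦ ∑ i < m, x^(2^i)`,
and membership of `a₁` in `𝔽_q` is expressed as `a₁ ^ (2^m) = a₁`. -/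
theorem kim_type_APN_characterization
    (m : ℕ) (hm : 4 ≤ m) (F : Type*) [Field F] [Fintype F]
    (hcard : Fintype.card F = 2 ^ (2 * m))
    (a₁ a₂ a₃ : F) (ha₁ : a₁ ^ (2 ^ m) = a₁)
    (f : F → F)
    (hf : ∀ x : F, f x = x ^ (3 * 2 ^ m) + a₁ * x ^ (2 * 2 ^ m + 1)
        + a₂ * x ^ (2 ^ m + 2) + a₃ * x ^ 3)
    (θ₁ θ₂ θ₃ θ₄ : F)
    (hθ₁ : θ₁ = 1 + a₁ ^ 2 + a₂ * a₂ ^ (2 ^ m) + a₃ * a₃ ^ (2 ^ m))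
    (hθ₂ : θ₂ = a₁ + a₂ ^ (2 ^ m) * a₃)
    (hθ₃ : θ₃ = a₂ ^ (2 ^ m) + a₁ * a₃ ^ (2 ^ m))
    (hθ₄ : θ₄ = a₁ ^ 2 + a₂ * a₂ ^ (2 ^ m)) :
    IsAPN f ↔
      ((Even m ∧
          ((θ₁ ≠ 0 ∧ (∑ i ∈ Finset.range m, (θ₂ * θ₂ ^ (2 ^ m) / θ₁ ^ 2) ^ 2 ^ i) = 0 ∧
              θ₁ ^ 2 * θ₄ + θ₁ * θ₂ * θ₂ ^ (2 ^ m) + θ₂ ^ 2 * θ₃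
                + (θ₂ ^ (2 ^ m)) ^ 2 * θ₃ ^ (2 ^ m) = 0) ∨
           (θ₁ ≠ 0 ∧ (∑ i ∈ Finset.range m, (θ₂ * θ₂ ^ (2 ^ m) / θ₁ ^ 2) ^ 2 ^ i) = 0 ∧
              θ₁ ^ 2 * θ₃ + θ₁ * (θ₂ ^ (2 ^ m)) ^ 2 + θ₂ ^ 2 * θ₃
                + (θ₂ ^ (2 ^ m)) ^ 2 * θ₃ ^ (2 ^ m) = 0))) ∨
       (Odd m ∧
          (θ₁ ≠ 0 ∧ (∑ i ∈ Finset.range m, (θ₂ * θ₂ ^ (2 ^ m) / θ₁ ^ 2) ^ 2 ^ i) = 0 ∧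
              θ₁ ^ 2 * θ₄ + θ₁ * θ₂ * θ₂ ^ (2 ^ m) + θ₂ ^ 2 * θ₃
                + (θ₂ ^ (2 ^ m)) ^ 2 * θ₃ ^ (2 ^ m) = 0))) := by
  apply kim_type_APN_characterization_general m hm F hcard 1 a₁ a₂ a₃ f (by simpa using hf) <;>
    simp [*, sq]
end

section
/- Let m ≥ 4 and q = 2^m. Let f : F_{q²} → F_{q²} be given by f(x) = x^{3q} + a₁x^{2q+1} + a₃x³ where a₁, a₃ ∈ F_{q²} and a₁ = 0 or a₃ = 0. If f is APN, then f is affine equivalent to G₁(x) = x³. -/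
/-!
Write `σ x = x ^ q`, an automorphism whose fixed field `𝔽_q` contains some `c ≠ 0, 1`.

If `a₁ = 0`, then `f` is the cube function followed by the additive map `L y = σ y + a₃ y`.
Derivatives of `f` take values in the image of `L` and have fibres of size at most two, so `L` has
at most two zeros; since the zeros are stable under multiplication by `c`, only `0` is left and `L`
is a permutation.

If `a₃ = 0`, then `f x = σ x ^ 2 * (σ x + a₁ x)`, and `f (x + y) = f x + f y` exactly when
`R x = R y`, where `R x = (σ x + a₁ x) / σ x ^ 2`. For `f` APN, `R` is therefore injective on
nonzero elements, and `R (c x) = R x / c` shows that it does not vanish there. So `R` permutes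
`Fˣ`, and the power sum `∑ R x ^ (q - 1)` over `Fˣ` is zero. Expanding it instead gives `a₁`,
so that `a₁ = 0`.
-/

section AffineEquivalence

variable {F : Type*} [Field F]

theorem isAffinePerm_addEquiv (e : F ≃+ F) : IsAffinePerm e :=
  ⟨e.bijective, fun x y => by rw [map_zero, add_zero, map_add]⟩

theorem affEquiv_addEquiv_comp (e : F ≃+ F) (g : F → F) : AffEquiv (e ∘ g) g :=
  ⟨e.symm, AddEquiv.refl F, isAffinePerm_addEquiv _, isAffinePerm_addEquiv _, fun x => by simp⟩

variable [Finite F]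

theorem IsAPN.card_le_two_mul_ncard {f : F → F} (hf : IsAPN f) {s : Set F}
    (hs : ∀ x, f (x + 1) + f x ∈ s) : Nat.card F ≤ 2 * s.ncard := by
  classical
  have := Fintype.ofFinite F
  rw [Nat.card_eq_fintype_card, Set.ncard_eq_toFinset_card']
  refine Finset.card_le_mul_card_image_of_maps_to (f := fun x => f (x + 1) + f x)
    (fun x _ => Set.mem_toFinset.2 (hs x)) 2 fun b _ => ?_
  have hfibre := hf 1 one_ne_zero b
  rwa [Set.ncard_eq_toFinset_card', Set.toFinset_ofPred] at hfibre

theorem IsAPN.ncard_ker_le_two {L : F →+ F} {g : F → F} (h : IsAPN (L ∘ g)) :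
    (L.ker : Set F).ncard ≤ 2 := by
  have hrange : Nat.card F ≤ 2 * Nat.card L.range :=
    h.card_le_two_mul_ncard fun x => ⟨g (x + 1) + g x, map_add L _ _⟩
  rw [← L.ker.card_mul_index, AddSubgroup.index_ker] at hrange
  exact Nat.le_of_mul_le_mul_right hrange Nat.card_pos

theorem injective_of_ncard_ker_le_two {L : F →+ F} (hker : (L.ker : Set F).ncard ≤ 2) {c : F}
    (hc0 : c ≠ 0) (hc1 : c ≠ 1) (hLc : ∀ y, L (c * y) = c * L y) : Function.Injective L := by
  rw [injective_iff_map_eq_zero]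
  intro k hk
  by_contra hk0
  refine hker.not_gt
    ((Set.two_lt_ncard (Set.toFinite _)).2 ⟨0, L.ker.zero_mem, k, hk, c * k, ?_, ?_, ?_, ?_⟩)
  · exact (hLc k).trans (by rw [hk, mul_zero])
  · exact Ne.symm hk0
  · exact (mul_ne_zero hc0 hk0).symm
  · exact fun h => hc1 (mul_right_cancel₀ hk0 (h.symm.trans (one_mul k).symm))

theorem IsAPN.affEquiv_of_map_mul {L : F →+ F} {g : F → F} (h : IsAPN (L ∘ g)) {c : F}
    (hc0 : c ≠ 0) (hc1 : c ≠ 1) (hLc : ∀ y, L (c * y) = c * L y) : AffEquiv (L ∘ g) g :=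
  have hL : Function.Bijective L := Finite.injective_iff_bijective.1
    (injective_of_ncard_ker_le_two h.ncard_ker_le_two hc0 hc1 hLc)
  affEquiv_addEquiv_comp (AddEquiv.ofBijective L hL) g

theorem IsAPN.affEquiv_map_add_mul {σ : F →+* F} {a : F} {g : F → F}
    (h : IsAPN fun x => σ (g x) + a * g x) {c : F} (hc0 : c ≠ 0) (hc1 : c ≠ 1) (hσc : σ c = c) :
    AffEquiv (fun x => σ (g x) + a * g x) g :=
  IsAPN.affEquiv_of_map_mul (L := (σ : F →+ F) + AddMonoidHom.mulLeft a) h hc0 hc1 fun y => by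
    simp [hσc, mul_add, mul_left_comm]

theorem IsAPN.map_add_ne [CharP F 2] {f : F → F} (hf : IsAPN f) (hf0 : f 0 = 0) {x y : F}
    (hx : x ≠ 0) (hy : y ≠ 0) (hxy : x ≠ y) : f (x + y) ≠ f x + f y := by
  intro hadd
  refine (hf x hx (f x)).not_gt
    ((Set.two_lt_ncard (Set.toFinite _)).2 ⟨0, ?_, x, ?_, y, ?_, hx.symm, hy.symm, hxy⟩)
  · simp [hf0]
  · simp [CharTwo.add_self_eq_zero, hf0]
  · simp [add_comm y, hadd, add_assoc, CharTwo.add_self_eq_zero]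

end AffineEquivalence

section KimRatio

variable {F : Type*} [Field F]

/-- The ratio `(σ x + a x) / σ(x)²` attached to the function `x ↦ σ(x)² (σ x + a x)`, whose
additivity defect at nonzero `x`, `y` vanishes exactly when `x` and `y` have the same ratio.
At `x = 0` it takes the junk value `0`. -/
def kimRatio (σ : F →+* F) (a x : F) : F :=
  (σ x + a * x) / σ x ^ 2

variable {σ : F →+* F} {a c : F}

theorem map_add_eq_iff_kimRatio_eq [CharP F 2] {x y : F} (hx : x ≠ 0) (hy : y ≠ 0) :
    σ (x + y) ^ 2 * (σ (x + y) + a * (x + y)) =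
        σ x ^ 2 * (σ x + a * x) + σ y ^ 2 * (σ y + a * y) ↔
      kimRatio σ a x = kimRatio σ a y := by
  have hdefect : σ (x + y) ^ 2 * (σ (x + y) + a * (x + y)) =
      σ x ^ 2 * (σ x + a * x) + σ y ^ 2 * (σ y + a * y) +
        ((σ x + a * x) * σ y ^ 2 + (σ y + a * y) * σ x ^ 2) := by
    rw [map_add, CharTwo.add_sq]
    ring
  rw [kimRatio, kimRatio, div_eq_div_iff (by simpa) (by simpa), hdefect, add_eq_left,
    CharTwo.add_eq_zero]

theorem IsAPN.injOn_kimRatio [Finite F] [CharP F 2]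
    (h : IsAPN fun x => σ x ^ 2 * (σ x + a * x)) : Set.InjOn (kimRatio σ a) {0}ᶜ := by
  intro x hx y hy hxy
  by_contra hne
  exact h.map_add_ne (by simp) hx hy hne ((map_add_eq_iff_kimRatio_eq hx hy).2 hxy)

theorem kimRatio_mul (hσc : σ c = c) (x : F) :
    kimRatio σ a (c * x) = c⁻¹ * kimRatio σ a x := by
  rcases eq_or_ne c 0 with rfl | hc0
  · simp [kimRatio]
  · rw [kimRatio, kimRatio, map_mul, hσc, mul_left_comm a, ← mul_add, mul_pow, sq c, mul_assoc,
      mul_div_mul_left _ _ hc0, ← div_div, div_eq_inv_mul _ c, mul_div_assoc]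

theorem kimRatio_ne_zero (hinj : Set.InjOn (kimRatio σ a) {0}ᶜ) (hc0 : c ≠ 0) (hc1 : c ≠ 1)
    (hσc : σ c = c) {x : F} (hx : x ≠ 0) : kimRatio σ a x ≠ 0 := by
  intro hzero
  have hcx : c * x = x := hinj (mul_ne_zero hc0 hx) hx (by rw [kimRatio_mul hσc, hzero, mul_zero])
  exact hc1 (mul_right_cancel₀ hx (hcx.trans (one_mul x).symm))

end KimRatio

section PowerSums

variable {F : Type*} [Field F] [Fintype F]

theorem sum_units_pow_eq_zero_of_injOn [DecidableEq F] {g : F → F} (hinj : Set.InjOn g {0}ᶜ)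
    (hne : ∀ x, x ≠ 0 → g x ≠ 0) {k : ℕ} (hk : ¬ Fintype.card F - 1 ∣ k) :
    ∑ x : Fˣ, g x ^ k = 0 := by
  let τ : Fˣ → Fˣ := fun x => Units.mk0 (g x) (hne x x.ne_zero)
  have hτ : Function.Bijective τ := Finite.injective_iff_bijective.1 fun x y hxy =>
    Units.ext (hinj x.ne_zero y.ne_zero (congrArg Units.val hxy))
  calc ∑ x : Fˣ, g x ^ k = ∑ x : Fˣ, (x : F) ^ k := hτ.sum_comp fun x : Fˣ => (x : F) ^ k
    _ = 0 := by simpa [hk] using FiniteField.sum_pow_units F k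

theorem sq_sub_one_eq_pred_mul_succ (q : ℕ) : q ^ 2 - 1 = (q - 1) * (q + 1) := by
  rw [mul_comm, ← Nat.sq_sub_sq, one_pow]

variable {q : ℕ}

theorem one_lt_of_card_eq_sq (hcard : Fintype.card F = q ^ 2) : 1 < q :=
  (Nat.one_lt_pow_iff two_ne_zero).1 (hcard ▸ Fintype.one_lt_card)

theorem natCast_eq_zero_of_card_eq_sq (hcard : Fintype.card F = q ^ 2) : (q : F) = 0 := by
  have hq : ((q ^ 2 : ℕ) : F) = 0 := hcard ▸ FiniteField.cast_card_eq_zero F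
  rwa [Nat.cast_pow, sq_eq_zero_iff] at hq

theorem exists_pow_eq_self_of_card_eq_sq (hcard : Fintype.card F = q ^ 2) (hq : 2 < q) :
    ∃ c : F, c ≠ 0 ∧ c ≠ 1 ∧ c ^ q = c := by
  classical
  have hlt : q + 1 < Nat.card Fˣ := by
    rw [Nat.card_eq_fintype_card, Fintype.card_units, hcard, sq_sub_one_eq_pred_mul_succ]
    exact lt_mul_left q.succ_pos (by lia)
  obtain ⟨u, hu⟩ := exists_pow_ne_one_of_isCyclic q.succ_ne_zero hlt
  refine ⟨(u : F) ^ (q + 1), by simp, fun h => hu (Units.ext (by simpa using h)), ?_⟩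
  calc ((u : F) ^ (q + 1)) ^ q = (u : F) ^ (q ^ 2) * (u : F) ^ q := by ring
    _ = (u : F) ^ (q + 1) := by rw [← hcard, FiniteField.pow_card, ← pow_succ']

theorem pow_pred_mul_succ_of_card_eq_sq (hcard : Fintype.card F = q ^ 2) {x : F} (hx : x ≠ 0) :
    x ^ ((q - 1) * (q + 1)) = 1 := by
  rw [← sq_sub_one_eq_pred_mul_succ, ← hcard, FiniteField.pow_card_sub_one_eq_one x hx]

theorem sum_units_pow_pred_mul [DecidableEq F] (hcard : Fintype.card F = q ^ 2) (k : ℕ) :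
    ∑ x : Fˣ, (x : F) ^ ((q - 1) * k) = if q + 1 ∣ k then -1 else 0 := by
  have hq : 0 < q - 1 := Nat.sub_pos_of_lt (one_lt_of_card_eq_sq hcard)
  simpa [hcard, sq_sub_one_eq_pred_mul_succ, Nat.mul_dvd_mul_iff_left hq] using
    FiniteField.sum_pow_units F ((q - 1) * k)

theorem succ_dvd_add_two_sub_iff {j : ℕ} (hj : j < q) : q + 1 ∣ q + 2 - j ↔ j = 1 := by
  constructor
  · intro hdvd
    have := Nat.eq_of_dvd_of_lt_two_mul (by lia) hdvd (by lia)
    lia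
  · rintro rfl
    exact dvd_rfl

theorem add_pow_pred_mul_pow_eq_sum {R : Type*} [CommSemiring R] (hq : 0 < q) (a x : R) :
    (a * x + x ^ q) ^ (q - 1) * x ^ (2 * (q - 1)) =
      ∑ j ∈ Finset.range q, a ^ j * (q - 1).choose j * x ^ ((q - 1) * (q + 2 - j)) := by
  obtain ⟨r, rfl⟩ := Nat.exists_eq_add_of_lt hq
  rw [add_pow, Finset.sum_mul]
  simp only [zero_add, Nat.add_sub_cancel]
  refine Finset.sum_congr rfl fun j hj => ?_
  obtain ⟨i, rfl⟩ := Nat.exists_eq_add_of_le (Finset.mem_range_succ_iff.1 hj)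
  rw [Nat.add_sub_cancel_left, show j + i + 1 + 2 - j = i + 3 by lia]
  ring

theorem sum_units_add_pow_pred_mul_pow [DecidableEq F] (hcard : Fintype.card F = q ^ 2) (a : F) :
    ∑ x : Fˣ, (a * x + (x : F) ^ q) ^ (q - 1) * (x : F) ^ (2 * (q - 1)) = a := by
  have hq : 1 < q := one_lt_of_card_eq_sq hcard
  calc ∑ x : Fˣ, (a * x + (x : F) ^ q) ^ (q - 1) * (x : F) ^ (2 * (q - 1))
    _ = ∑ j ∈ Finset.range q,
          a ^ j * (q - 1).choose j * ∑ x : Fˣ, (x : F) ^ ((q - 1) * (q + 2 - j)) := by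
      simp only [add_pow_pred_mul_pow_eq_sum (zero_lt_one.trans hq), Finset.mul_sum]
      exact Finset.sum_comm
    _ = ∑ j ∈ Finset.range q,
          if j = 1 then -(a ^ j * (q - 1).choose j) else 0 := by
      refine Finset.sum_congr rfl fun j hj => ?_
      simp only [sum_units_pow_pred_mul hcard, succ_dvd_add_two_sub_iff (Finset.mem_range.1 hj),
        mul_ite, mul_neg_one, mul_zero]
    _ = a := by
      simp [hq, hq.le, natCast_eq_zero_of_card_eq_sq hcard]

theorem kimRatio_pow_pred {σ : F →+* F} (hcard : Fintype.card F = q ^ 2)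
    (hσ : ∀ x, σ x = x ^ q) (a : F) {x : F} (hx : x ≠ 0) :
    kimRatio σ a x ^ (q - 1) = (a * x + x ^ q) ^ (q - 1) * x ^ (2 * (q - 1)) := by
  have hinv : x ^ (2 * (q - 1)) * ((x ^ q) ^ 2) ^ (q - 1) = 1 := by
    calc x ^ (2 * (q - 1)) * ((x ^ q) ^ 2) ^ (q - 1) = (x ^ ((q - 1) * (q + 1))) ^ 2 := by ring
      _ = 1 := by rw [pow_pred_mul_succ_of_card_eq_sq hcard hx, one_pow]
  rw [kimRatio, hσ, div_pow, div_eq_iff (by simp [hx]), mul_assoc, hinv, mul_one, add_comm]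

theorem IsAPN.eq_zero_of_sq_mul_add [CharP F 2] {σ : F →+* F} {a : F}
    (h : IsAPN fun x => σ x ^ 2 * (σ x + a * x)) (hcard : Fintype.card F = q ^ 2) (hq : 2 < q)
    (hσ : ∀ x, σ x = x ^ q) : a = 0 := by
  classical
  obtain ⟨c, hc0, hc1, hcq⟩ := exists_pow_eq_self_of_card_eq_sq hcard hq
  have hinj := h.injOn_kimRatio
  have hne (x : F) (hx : x ≠ 0) : kimRatio σ a x ≠ 0 :=
    kimRatio_ne_zero hinj hc0 hc1 ((hσ c).trans hcq) hx
  have hndvd : ¬ Fintype.card F - 1 ∣ q - 1 := by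
    rw [hcard, sq_sub_one_eq_pred_mul_succ]
    exact Nat.not_dvd_of_pos_of_lt (by lia) (lt_mul_right (by lia) (by lia))
  calc a = ∑ x : Fˣ, (a * x + (x : F) ^ q) ^ (q - 1) * (x : F) ^ (2 * (q - 1)) :=
        (sum_units_add_pow_pred_mul_pow hcard a).symm
    _ = ∑ x : Fˣ, kimRatio σ a x ^ (q - 1) :=
        Finset.sum_congr rfl fun x _ => (kimRatio_pow_pred hcard hσ a x.ne_zero).symm
    _ = 0 := sum_units_pow_eq_zero_of_injOn hinj hne hndvd

end PowerSums

theorem kim_type_vanishing_coeff_equiv_cube_general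
    (m : ℕ) (hm : 2 ≤ m) (F : Type*) [Field F] [Fintype F]
    (hcard : Fintype.card F = 2 ^ (2 * m))
    (a₁ a₃ : F) (ha : a₁ = 0 ∨ a₃ = 0)
    (f : F → F)
    (hf : ∀ x : F, f x = x ^ (3 * 2 ^ m) + a₁ * x ^ (2 * 2 ^ m + 1) + a₃ * x ^ 3)
    (hAPN : IsAPN f) :
    AffEquiv f (fun x : F => x ^ 3) := by
  have : Fact (Nat.Prime 2) := ⟨Nat.prime_two⟩
  have : CharP F 2 := charP_of_card_eq_prime_pow hcard
  have hcard_sq : Fintype.card F = (2 ^ m) ^ 2 := by rw [hcard, mul_comm, pow_mul]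
  have hq : 2 < 2 ^ m := lt_self_pow₀ one_lt_two hm
  let σ : F →+* F := iterateFrobenius F 2 m
  have hσ (x : F) : σ x = x ^ 2 ^ m := iterateFrobenius_def 2 m x
  have ha₁ : a₁ = 0 := by
    refine ha.elim id fun ha₃ => IsAPN.eq_zero_of_sq_mul_add (σ := σ) ?_ hcard_sq hq hσ
    convert hAPN using 2 with x
    rw [hf, hσ, ha₃]
    ring
  have hfσ : f = fun x => σ (x ^ 3) + a₃ * x ^ 3 := by
    funext x
    rw [hf, hσ, ha₁, pow_mul, zero_mul, add_zero]
  obtain ⟨c, hc0, hc1, hcq⟩ := exists_pow_eq_self_of_card_eq_sq hcard_sq hq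
  rw [hfσ] at hAPN ⊢
  exact hAPN.affEquiv_map_add_mul hc0 hc1 ((hσ c).trans hcq)

/-- If `f(x) = x^{3q} + a₁x^{2q+1} + a₃x³` with `a₁ = 0` or `a₃ = 0` is APN, then `f` is
affine equivalent to the Gold function `G₁(x) = x³`. Here `q = 2^m`, `m ≥ 4`. -/
theorem kim_type_vanishing_coeff_equiv_cube
    (m : ℕ) (hm : 4 ≤ m) (F : Type*) [Field F] [Fintype F]
    (hcard : Fintype.card F = 2 ^ (2 * m))
    (a₁ a₃ : F) (ha : a₁ = 0 ∨ a₃ = 0)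
    (f : F → F)
    (hf : ∀ x : F, f x = x ^ (3 * 2 ^ m) + a₁ * x ^ (2 * 2 ^ m + 1) + a₃ * x ^ 3)
    (hAPN : IsAPN f) :
    AffEquiv f (fun x : F => x ^ 3) :=
  kim_type_vanishing_coeff_equiv_cube_general m (le_trans (by norm_num) hm) F hcard a₁ a₃ ha f hf
    hAPN
end

section
/- Let m ≥ 4 and q = 2^m. Let f : F_{q²} → F_{q²} be given by f(x) = x^{3q} + a₁x^{2q+1} + a₃x³ where a₁ ∈ F_q and a₃ ∈ F_{q²}. If (a₁, 0, a₃) ∈ Γ₂, then f is affine equivalent to G₁(x) = x³ or f is affine equivalent to G₂(x) = x^{2^{m-1}+1}. -/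
/-!
Write `σ` for `z ↦ z̄` and `b` for `a₃`. When `a₂ = 0`, dividing the quartic condition of `Γ₂` by
`a₁ ≠ 0` and comparing it with its conjugate gives `σ b = b` and `a₁ = θ₁ b`, that is,
`(a₁ + b) (a₁ b + b² + 1) = 0`; the trace condition then says that `b = s² + s` for some `s`
fixed by `σ`. With `u = (s + 1) x + s σ(x)`, an invertible substitution, the map becomes

* `b x³ + σ(x³)` if `a₁ = 0`;
* `s u³ + (s + 1) σ(u³)` if `a₁ = b`;
* `b⁻¹ (s³ u² σ(u) + (s + 1)³ σ(u² σ(u)))` if `a₁ b + b² + 1 = 0`.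

The outer maps `z ↦ α z + β σ(z)` are invertible because `α σ(α) ≠ β σ(β)`, and `u² σ(u)` is the
square of `u ^ (2 ^ (m - 1) + 1)`.
-/

section AffineEquivalence

variable {F : Type*} [Field F]

theorem isAffinePerm_of_addMonoidHom (L : F →+ F) (hL : Function.Bijective L) :
    IsAffinePerm L :=
  ⟨hL, fun x y => by rw [map_add, map_zero, add_zero]⟩

theorem IsAffinePerm.comp {L M : F → F} (hL : IsAffinePerm L) (hM : IsAffinePerm M) :
    IsAffinePerm (L ∘ M) := by
  refine ⟨hL.1.comp hM.1, fun x y => add_right_cancel (b := L 0) ?_⟩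
  calc L (M (x + y)) + L (M 0) + L 0
      = L (M (x + y) + M 0) + L 0 + L 0 := by rw [hL.2]
    _ = L (M x) + L (M y) + L 0 := by rw [hM.2, hL.2]

theorem IsAffinePerm.symm {e : F ≃ F} (he : IsAffinePerm e) : IsAffinePerm e.symm := by
  refine ⟨e.symm.bijective, fun x y => e.injective (add_right_cancel (b := e 0) ?_)⟩
  rw [he.2, he.2]
  simp only [e.apply_symm_apply, add_zero]

theorem AffEquiv.symm {f g : F → F} (h : AffEquiv f g) : AffEquiv g f := by
  obtain ⟨L₁, L₂, hL₁, hL₂, hg⟩ := h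
  let e₁ := Equiv.ofBijective L₁ hL₁.1
  let e₂ := Equiv.ofBijective L₂ hL₂.1
  refine ⟨e₁.symm, e₂.symm, IsAffinePerm.symm hL₁, IsAffinePerm.symm hL₂, fun x => ?_⟩
  rw [e₁.eq_symm_apply, hg]
  exact congrArg (fun z => L₁ (f z)) (e₂.apply_symm_apply x).symm

theorem AffEquiv.trans {f g h : F → F} (hfg : AffEquiv f g) (hgh : AffEquiv g h) :
    AffEquiv f h := by
  obtain ⟨L₁, L₂, hL₁, hL₂, hg⟩ := hfg
  obtain ⟨M₁, M₂, hM₁, hM₂, hh⟩ := hgh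
  exact ⟨M₁ ∘ L₁, L₂ ∘ M₂, hM₁.comp hL₁, hL₂.comp hM₂, fun x => by
    rw [hh, hg, Function.comp_apply, Function.comp_apply]⟩

theorem affEquiv_sq [CharP F 2] [PerfectRing F 2] (g : F → F) : AffEquiv g (fun x => g x ^ 2) :=
  ⟨frobenius F 2, id,
    isAffinePerm_of_addMonoidHom (frobenius F 2 : F →+ F) (bijective_frobenius F 2),
    isAffinePerm_of_addMonoidHom (AddMonoidHom.id F) Function.bijective_id, fun _ => rfl⟩

theorem affEquiv_pow_sq_mul_pow [CharP F 2] [PerfectRing F 2] {m : ℕ} (hm : m ≠ 0) :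
    AffEquiv (fun x : F => x ^ (2 ^ (m - 1) + 1)) (fun x => x ^ 2 * x ^ 2 ^ m) := by
  convert affEquiv_sq (fun x : F => x ^ (2 ^ (m - 1) + 1)) using 2 with x
  rw [← pow_mul, add_mul, ← pow_succ, Nat.sub_one_add_one hm, one_mul, pow_add, mul_comm]

end AffineEquivalence

section LinearizedBinomial

variable {F : Type*} [Field F]

/-- The additive map `z ↦ α z + β σ(z)`. It is linear over the fixed field of an involution `σ`,
and such maps serve as the affine changes of variables. -/
def linearizedBinomial (σ : F →+* F) (α β : F) : F →+ F :=
  AddMonoidHom.mulLeft α + (AddMonoidHom.mulLeft β).comp (σ : F →+ F)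

variable {σ : F →+* F} {α β : F}

theorem linearizedBinomial_apply (z : F) : linearizedBinomial σ α β z = α * z + β * σ z :=
  rfl

theorem linearizedBinomial_adjugate_apply (hσ : Function.Involutive σ) (z : F) :
    linearizedBinomial σ (σ α) (-β) (linearizedBinomial σ α β z) =
      (α * σ α - β * σ β) * z := by
  simp only [linearizedBinomial_apply, map_add, map_mul, hσ _]
  ring

theorem linearizedBinomial_apply_adjugate (hσ : Function.Involutive σ) (z : F) :
    linearizedBinomial σ α β (linearizedBinomial σ (σ α) (-β) z) =
      (α * σ α - β * σ β) * z := by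
  simp only [linearizedBinomial_apply, map_add, map_mul, map_neg, hσ _]
  ring

theorem isAffinePerm_linearizedBinomial (hσ : Function.Involutive σ)
    (hαβ : α * σ α - β * σ β ≠ 0) : IsAffinePerm (linearizedBinomial σ α β) := by
  refine isAffinePerm_of_addMonoidHom _ ⟨fun x y hxy => mul_left_cancel₀ hαβ ?_, fun z => ?_⟩
  · rw [← linearizedBinomial_adjugate_apply hσ, hxy, linearizedBinomial_adjugate_apply hσ]
  · exact ⟨_, (linearizedBinomial_apply_adjugate hσ ((α * σ α - β * σ β)⁻¹ * z)).trans
      (mul_inv_cancel_left₀ hαβ z)⟩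

theorem map_linearizedBinomial_add_one (hσ : Function.Involutive σ) {s : F} (hs : σ s = s)
    (x : F) : σ (linearizedBinomial σ (s + 1) s x) = (s + 1) * σ x + s * x := by
  rw [linearizedBinomial_apply, map_add, map_mul, map_mul, map_add, map_one, hs, hσ]

theorem isAffinePerm_linearizedBinomial_add_one [CharP F 2] (hσ : Function.Involutive σ) {s : F}
    (hs : σ s = s) : IsAffinePerm (linearizedBinomial σ (s + 1) s) := by
  refine isAffinePerm_linearizedBinomial hσ ?_
  have hnorm : (s + 1) * (s + 1) - s * s = 1 := by
    linear_combination s * CharTwo.two_eq_zero (R := F)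
  rw [map_add, map_one, hs, hnorm]
  exact one_ne_zero

end LinearizedBinomial

section BinaryCubics

variable {R : Type*} [CommRing R] [CharP R 2]

theorem cubic_eq_add_cubes (s x y : R) :
    y ^ 3 + (s ^ 2 + s) * (y ^ 2 * x) + (s ^ 2 + s) * x ^ 3 =
      s * ((s + 1) * x + s * y) ^ 3 + (s + 1) * ((s + 1) * y + s * x) ^ 3 := by
  grind [CharTwo.two_eq_zero (R := R)]

theorem cubic_eq_add_sq_mul (s x y : R) :
    (s ^ 2 + s) * y ^ 3 + (s ^ 2 + s + 1) ^ 2 * (y ^ 2 * x) + (s ^ 2 + s) ^ 2 * x ^ 3 =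
      s ^ 3 * (((s + 1) * x + s * y) ^ 2 * ((s + 1) * y + s * x)) +
        (s + 1) ^ 3 * (((s + 1) * y + s * x) ^ 2 * ((s + 1) * x + s * y)) := by
  grind [CharTwo.two_eq_zero (R := R)]

end BinaryCubics

section KimTypeMap

variable {F : Type*} [Field F]

/-- The Kim-type map `x ↦ x̄³ + a x̄² x + b x³`, without its `x̄ x²` term, over a field with a
conjugation `z̄ = σ z`. -/
def kimTypeMap (σ : F →+* F) (a b x : F) : F :=
  σ x ^ 3 + a * (σ x ^ 2 * x) + b * x ^ 3

variable {σ : F →+* F}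

theorem affEquiv_cube_kimTypeMap_zero (hσ : Function.Involutive σ) {b : F} (hb : b * σ b ≠ 1) :
    AffEquiv (fun x => x ^ 3) (kimTypeMap σ 0 b) := by
  refine ⟨linearizedBinomial σ b 1, AddMonoidHom.id F, isAffinePerm_linearizedBinomial hσ ?_,
    isAffinePerm_of_addMonoidHom _ Function.bijective_id, fun x => ?_⟩
  · simpa only [map_one, mul_one] using sub_ne_zero.mpr hb
  · simp only [kimTypeMap, linearizedBinomial_apply, AddMonoidHom.id_apply, map_pow]
    ring

variable [CharP F 2]

theorem affEquiv_cube_kimTypeMap_self (hσ : Function.Involutive σ) {s : F} (hs : σ s = s) :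
    AffEquiv (fun x => x ^ 3) (kimTypeMap σ (s ^ 2 + s) (s ^ 2 + s)) := by
  have h2 : (2 : F) = 0 := CharTwo.two_eq_zero
  refine ⟨linearizedBinomial σ s (s + 1), linearizedBinomial σ (s + 1) s,
    isAffinePerm_linearizedBinomial hσ ?_, isAffinePerm_linearizedBinomial_add_one hσ hs,
    fun x => ?_⟩
  · have hnorm : s * s - (s + 1) * (s + 1) = 1 := by linear_combination -(s + 1) * h2
    rw [map_add, map_one, hs, hnorm]
    exact one_ne_zero
  · rw [kimTypeMap, linearizedBinomial_apply (α := s), map_pow,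
      map_linearizedBinomial_add_one hσ hs, linearizedBinomial_apply]
    exact cubic_eq_add_cubes s x (σ x)

theorem affEquiv_sq_mul_map_kimTypeMap (hσ : Function.Involutive σ) {s a : F} (hs : σ s = s)
    (ha : a ≠ 0) (hab : a * (s ^ 2 + s) = (s ^ 2 + s + 1) ^ 2) :
    AffEquiv (fun x => x ^ 2 * σ x) (kimTypeMap σ a (s ^ 2 + s)) := by
  have hb : s ^ 2 + s ≠ 0 := fun hb => by simp [hb] at hab
  refine ⟨linearizedBinomial σ (s ^ 3 / (s ^ 2 + s)) ((s + 1) ^ 3 / (s ^ 2 + s)),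
    linearizedBinomial σ (s + 1) s, isAffinePerm_linearizedBinomial hσ ?_,
    isAffinePerm_linearizedBinomial_add_one hσ hs, fun x => ?_⟩
  · have hnorm : s ^ 3 / (s ^ 2 + s) * (s ^ 3 / (s ^ 2 + s)) -
        (s + 1) ^ 3 / (s ^ 2 + s) * ((s + 1) ^ 3 / (s ^ 2 + s)) = a / (s ^ 2 + s) := by
      field_simp
      grind [CharTwo.two_eq_zero (R := F)]
    simp only [map_div₀, map_pow, map_add, map_one, hs, hnorm]
    exact div_ne_zero ha hb
  · rw [linearizedBinomial_apply]
    beta_reduce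
    rw [map_mul, map_pow, hσ, map_linearizedBinomial_add_one hσ hs, linearizedBinomial_apply,
      kimTypeMap, div_mul_eq_mul_div, div_mul_eq_mul_div, ← add_div,
      eq_div_iff hb, ← cubic_eq_add_sq_mul, ← hab]
    ring

theorem map_eq_self_and_eq_mul_of_quartic (hσ : Function.Involutive σ) {a b θ : F}
    (ha : σ a = a) (ha0 : a ≠ 0) (hθ : θ = 1 + a ^ 2 + b * σ b) (hθ0 : θ ≠ 0)
    (hquartic : θ ^ 2 * (a * σ b) + θ * σ a ^ 2 + a ^ 2 * (a * σ b)
      + σ a ^ 2 * σ (a * σ b) = 0) :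
    σ b = b ∧ a = θ * b := by
  have hσθ : σ θ = θ := by
    rw [hθ, map_add, map_add, map_one, map_pow, map_mul, ha, hσ, mul_comm (σ b)]
  rw [map_mul, hσ, ha] at hquartic
  have hcubic : θ ^ 2 * σ b + θ * a + a ^ 2 * (b + σ b) = 0 :=
    mul_left_cancel₀ ha0 (by linear_combination hquartic)
  have hconj : θ ^ 2 * b + θ * a + a ^ 2 * (σ b + b) = 0 := by
    simpa only [map_add, map_mul, map_pow, map_zero, ha, hσθ, hσ _] using congrArg σ hcubic
  have hb : σ b = b :=
    mul_left_cancel₀ (pow_ne_zero 2 hθ0) (by linear_combination hcubic - hconj)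
  refine ⟨hb, mul_left_cancel₀ hθ0 ?_⟩
  rw [hb] at hconj
  linear_combination hconj - (θ ^ 2 * b + a ^ 2 * b) * CharTwo.two_eq_zero (R := F)

theorem kimTypeMap_affEquiv_cube_or_sq_mul_map (hσ : Function.Involutive σ) {a b θ : F}
    (ha : σ a = a) (hθ : θ = 1 + a ^ 2 + b * σ b) (hθ0 : θ ≠ 0)
    (hAS : ∃ s, s ^ 2 - s = a * σ a / θ ^ 2 ∧ σ s = s)
    (hquartic : θ ^ 2 * (a * σ b) + θ * σ a ^ 2 + a ^ 2 * (a * σ b)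
      + σ a ^ 2 * σ (a * σ b) = 0) :
    AffEquiv (kimTypeMap σ a b) (fun x => x ^ 3) ∨
      AffEquiv (kimTypeMap σ a b) (fun x => x ^ 2 * σ x) := by
  have h2 : (2 : F) = 0 := CharTwo.two_eq_zero
  rcases eq_or_ne a 0 with rfl | ha0
  · refine .inl (affEquiv_cube_kimTypeMap_zero hσ fun hb => hθ0 ?_).symm
    linear_combination hθ + hb + h2
  obtain ⟨hb, hab⟩ := map_eq_self_and_eq_mul_of_quartic hσ ha ha0 hθ hθ0 hquartic
  obtain ⟨s, hσs, rfl⟩ : ∃ s, σ s = s ∧ s ^ 2 + s = b := by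
    obtain ⟨t, ht, hσt⟩ := hAS
    have hb2 : a * σ a / θ ^ 2 = b ^ 2 := by
      rw [ha, hab]
      field_simp
    refine ⟨b + t, by rw [map_add, hb, hσt], ?_⟩
    linear_combination ht + hb2 + (b ^ 2 + b * t + t) * h2
  set b := s ^ 2 + s
  have hfactor : (a - b) * (a * b - (b + 1) ^ 2) = 0 := by
    rw [hθ, hb] at hab
    linear_combination -hab + (b ^ 2 - a * b ^ 2 - a * b) * h2
  rcases mul_eq_zero.mp hfactor with hself | hsq
  · rw [sub_eq_zero.mp hself]
    exact .inl (affEquiv_cube_kimTypeMap_self hσ hσs).symm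
  · exact .inr (affEquiv_sq_mul_map_kimTypeMap hσ hσs ha0 (sub_eq_zero.mp hsq)).symm

end KimTypeMap

section ArtinSchreier

open Polynomial

variable {p : ℕ} [Fact p.Prime]

theorem sum_range_pow_sub_self_pow {R : Type*} [CommRing R] [CharP R p] (x : R) (m : ℕ) :
    ∑ i ∈ Finset.range m, (x ^ p - x) ^ p ^ i = x ^ p ^ m - x := by
  simp only [sub_pow_char_pow, ← pow_mul, ← pow_succ']
  rw [Finset.sum_range_sub (fun i => x ^ p ^ i), pow_zero, pow_one]

theorem X_pow_sub_X_sub_C_dvd_X_pow_sub_X {R : Type*} [CommRing R] [CharP R p] {m : ℕ} {t : R}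
    (ht : ∑ i ∈ Finset.range m, t ^ p ^ i = 0) :
    (X ^ p - X - C t : R[X]) ∣ X ^ p ^ m - X := by
  have hsum : ∑ i ∈ Finset.range m, (X ^ p - X - C t : R[X]) ^ p ^ i = X ^ p ^ m - X := by
    simp only [sub_pow_char_pow _ (C t), Finset.sum_sub_distrib, sum_range_pow_sub_self_pow,
      ← C_pow, ← map_sum, ht, map_zero, sub_zero]
  rw [← hsum]
  exact Finset.dvd_sum fun i _ => dvd_pow_self _ (pow_ne_zero i (Fact.out : p.Prime).ne_zero)

theorem exists_pow_sub_self_eq_of_sum_pow_eq_zero {F : Type*} [Field F] [CharP F p] {m n : ℕ}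
    (hcard : Nat.card F = p ^ n) (hmn : m ∣ n) {t : F}
    (ht : ∑ i ∈ Finset.range m, t ^ p ^ i = 0) :
    ∃ s : F, s ^ p - s = t ∧ s ^ p ^ m = s := by
  have hp : p.Prime := Fact.out
  have hdvd : (X ^ p - X - C t : F[X]) ∣ X ^ p ^ n - X :=
    (X_pow_sub_X_sub_C_dvd_X_pow_sub_X ht).trans (dvd_pow_pow_sub_self_of_dvd hmn)
  have hfinite : Finite F :=
    Nat.finite_of_card_ne_zero (hcard ▸ pow_ne_zero n hp.ne_zero)
  have hne : (X ^ p ^ n - X : F[X]) ≠ 0 :=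
    FiniteField.X_pow_card_sub_X_ne_zero F (hcard ▸ Finite.one_lt_card)
  have hdeg : (X ^ p - X - C t : F[X]).degree ≠ 0 := by
    refine degree_ne_of_natDegree_ne ?_
    rw [natDegree_sub_C, FiniteField.X_pow_card_sub_X_natDegree_eq F hp.one_lt]
    exact hp.ne_zero
  have hsplits := (hcard ▸ splits_X_pow_nat_card_sub_X).of_dvd hne hdvd
  obtain ⟨s, hs⟩ := hsplits.exists_eval_eq_zero hdeg
  have hst : s ^ p - s = t := by simpa [sub_eq_zero] using hs
  refine ⟨s, hst, ?_⟩
  rw [← sub_eq_zero, ← sum_range_pow_sub_self_pow, hst, ht]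

end ArtinSchreier

/-- The set `Γ₂` of coefficient triples `(a₁, a₂, a₃)`, with `z̄ = z ^ 2 ^ m` and the trace of
`𝔽_{2^m}` written out as a sum of powers. -/
def gammaTwo (m : ℕ) (F : Type*) [Field F] : Set (F × F × F) :=
  {(a₁, a₂, a₃) |
    let θ₁ := 1 + a₁ ^ 2 + a₂ * a₂ ^ 2 ^ m + a₃ * a₃ ^ 2 ^ m
    let θ₂ := a₁ + a₂ ^ 2 ^ m * a₃
    let θ₃ := a₂ ^ 2 ^ m + a₁ * a₃ ^ 2 ^ m
    θ₁ ≠ 0 ∧ ∑ i ∈ Finset.range m, (θ₂ * θ₂ ^ 2 ^ m / θ₁ ^ 2) ^ 2 ^ i = 0 ∧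
      θ₁ ^ 2 * θ₃ + θ₁ * (θ₂ ^ 2 ^ m) ^ 2 + θ₂ ^ 2 * θ₃ + (θ₂ ^ 2 ^ m) ^ 2 * θ₃ ^ 2 ^ m = 0}

section FiniteField

variable {F : Type*} [Field F] [Fintype F] {m : ℕ}

theorem involutive_iterateFrobenius_of_card {p : ℕ} [ExpChar F p]
    (hcard : Fintype.card F = p ^ (2 * m)) : Function.Involutive (iterateFrobenius F p m) := by
  intro x
  rw [iterateFrobenius_def, iterateFrobenius_def, ← pow_mul, ← pow_add, ← two_mul, ← hcard,
    FiniteField.pow_card]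

theorem kim_type_Gamma2_equiv_Gold_general (hcard : Fintype.card F = 2 ^ (2 * m)) {a₁ a₃ : F}
    (ha₁ : a₁ ^ 2 ^ m = a₁) (hΓ₂ : (a₁, 0, a₃) ∈ gammaTwo m F) :
    AffEquiv (fun x : F => x ^ (3 * 2 ^ m) + a₁ * x ^ (2 * 2 ^ m + 1) + a₃ * x ^ 3)
        (fun x => x ^ 3) ∨
      AffEquiv (fun x : F => x ^ (3 * 2 ^ m) + a₁ * x ^ (2 * 2 ^ m + 1) + a₃ * x ^ 3)
        (fun x => x ^ (2 ^ (m - 1) + 1)) := by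
  have hchar : CharP F 2 := charP_of_card_eq_prime_pow hcard
  have hm : m ≠ 0 := by
    rintro rfl
    exact Fintype.one_lt_card.ne' hcard
  have hkim : (fun x : F => x ^ (3 * 2 ^ m) + a₁ * x ^ (2 * 2 ^ m + 1) + a₃ * x ^ 3) =
      kimTypeMap (iterateFrobenius F 2 m) a₁ a₃ := by
    funext x
    rw [kimTypeMap, iterateFrobenius_def]
    ring
  obtain ⟨hθ₁, htrace, hquartic⟩ := hΓ₂
  simp only [zero_pow (pow_ne_zero m two_ne_zero), zero_mul, add_zero, zero_add]
    at hθ₁ htrace hquartic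
  have hAS := exists_pow_sub_self_eq_of_sum_pow_eq_zero
    (Nat.card_eq_fintype_card.trans hcard) (dvd_mul_left m 2) htrace
  rw [hkim]
  exact (kimTypeMap_affEquiv_cube_or_sq_mul_map (involutive_iterateFrobenius_of_card hcard)
    ha₁ rfl hθ₁ hAS hquartic).imp_right (·.trans (affEquiv_pow_sq_mul_pow hm).symm)

end FiniteField

/-- If `(a₁, 0, a₃) ∈ Γ₂`, then `f(x) = x^{3q} + a₁x^{2q+1} + a₃x³` is affine equivalent to
`G₁(x) = x³` or to `G₂(x) = x^{2^{m-1}+1}`. Here `q = 2^m`, `m ≥ 4`, `z̄ = z^q`,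
`Tr_m` is realized as `x ↦ ∑ i < m, x^(2^i)`, and `a₁ ∈ 𝔽_q` is expressed as `a₁^(2^m) = a₁`. -/
theorem kim_type_Gamma2_equiv_Gold
    (m : ℕ) (hm : 4 ≤ m) (F : Type*) [Field F] [Fintype F]
    (hcard : Fintype.card F = 2 ^ (2 * m))
    (a₁ a₂ a₃ : F) (ha₁ : a₁ ^ (2 ^ m) = a₁) (ha₂ : a₂ = 0)
    (f : F → F)
    (hf : ∀ x : F, f x = x ^ (3 * 2 ^ m) + a₁ * x ^ (2 * 2 ^ m + 1) + a₃ * x ^ 3)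
    (θ₁ θ₂ θ₃ : F)
    (hθ₁ : θ₁ = 1 + a₁ ^ 2 + a₂ * a₂ ^ (2 ^ m) + a₃ * a₃ ^ (2 ^ m))
    (hθ₂ : θ₂ = a₁ + a₂ ^ (2 ^ m) * a₃)
    (hθ₃ : θ₃ = a₂ ^ (2 ^ m) + a₁ * a₃ ^ (2 ^ m))
    (hΓ₂ : θ₁ ≠ 0 ∧ (∑ i ∈ Finset.range m, (θ₂ * θ₂ ^ (2 ^ m) / θ₁ ^ 2) ^ 2 ^ i) = 0 ∧
        θ₁ ^ 2 * θ₃ + θ₁ * (θ₂ ^ (2 ^ m)) ^ 2 + θ₂ ^ 2 * θ₃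
          + (θ₂ ^ (2 ^ m)) ^ 2 * θ₃ ^ (2 ^ m) = 0) :
    AffEquiv f (fun x : F => x ^ 3) ∨ AffEquiv f (fun x : F => x ^ (2 ^ (m - 1) + 1)) := by
  subst hθ₁ hθ₂ hθ₃ ha₂
  exact funext hf ▸ kim_type_Gamma2_equiv_Gold_general hcard ha₁ hΓ₂
end
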